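/- arXiv:2308.10546 — 6 statements merged into one kernel-verified Lean document; each statement's English description precedes it below -/
import Mathlib

section
/- Let G and H be graphs such that H is connected and |V(H)| ≥ s(G). Then R(G,H) ≥ (χ(G) − 1)(|V(H)| − 1) + s(G). -/
open SimpleGraph

/-- `containsCopy F G` : the graph `F` contains a copy of the graph `G` (as a subgraph). -/
def containsCopy {V W : Type*} (F : SimpleGraph V) (G : SimpleGraph W) : Prop :=
  ∃ f : G →g F, Function.Injective f

/-- `arrows N G H` : every red/blue coloring of the edges of `K_N` (given by the graph `R` of
red edges, whose complement is the graph of blue edges) contains a red copy of `G` or a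
blue copy of `H`. -/
def arrows {V W : Type*} (N : ℕ) (G : SimpleGraph V) (H : SimpleGraph W) : Prop :=
  ∀ R : SimpleGraph (Fin N), containsCopy R G ∨ containsCopy Rᶜ H

/-- The Ramsey number `R(G, H)`. -/
noncomputable def ramseyNumber {V W : Type*} (G : SimpleGraph V) (H : SimpleGraph W) : ℕ :=
  sInf { N : ℕ | 0 < N ∧ arrows N G H }

/-- The generalized fan `K₁ + nK_t` : the join of a single vertex (`none`) with `n` disjoint
copies of `K_t`. -/
def genFan (n t : ℕ) : SimpleGraph (Option (Fin n × Fin t)) :=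
  SimpleGraph.fromRel (fun a b =>
    a = none ∨ ∃ p q : Fin n × Fin t, a = some p ∧ b = some q ∧ p.1 = q.1)

/-- A graph `G` is edge-critical if it has an edge `e` with `χ(G - e) = χ(G) - 1`. -/
def EdgeCritical {V : Type*} (G : SimpleGraph V) : Prop :=
  ∃ u v : V, G.Adj u v ∧ (G.deleteEdges {s(u, v)}).chromaticNumber + 1 = G.chromaticNumber

/-- `K_m ⊔ K_{1,ℓ}` : the complete graph on the `m` vertices `some i`, together with one new
vertex `none` joined to exactly the `ℓ` vertices `some i` with `i < ℓ` (for `ℓ ≤ m`). -/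
def KstarK (m ℓ : ℕ) : SimpleGraph (Option (Fin m)) :=
  SimpleGraph.fromRel (fun a b =>
    ((∃ i : Fin m, a = some i) ∧ ∃ j : Fin m, b = some j) ∨
      (a = none ∧ ∃ j : Fin m, b = some j ∧ (j : ℕ) < ℓ))

/-- `starArrows m ℓ G H` : every red/blue coloring of the edges of `K_m ⊔ K_{1,ℓ}` (the red
edges forming a subgraph `R`, the blue edges the remaining edges) contains a red copy of `G`
or a blue copy of `H`. -/
def starArrows {V W : Type*} (m ℓ : ℕ) (G : SimpleGraph V) (H : SimpleGraph W) : Prop :=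
  ∀ R : SimpleGraph (Option (Fin m)), R ≤ KstarK m ℓ →
    containsCopy R G ∨ containsCopy (KstarK m ℓ \ R) H

/-- The star-critical Ramsey number `r₊(G, H)`. -/
noncomputable def starRamsey {V W : Type*} (G : SimpleGraph V) (H : SimpleGraph W) : ℕ :=
  sInf { ℓ : ℕ | starArrows (ramseyNumber G H - 1) ℓ G H }

/-- The chromatic number of `G` as a natural number. -/
noncomputable def chromNum {V : Type*} (G : SimpleGraph V) : ℕ := G.chromaticNumber.toNat

/-- `s(G)` : the minimum size of a color class over all proper `χ(G)`-colorings of `G`. -/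
noncomputable def minClassSize {V : Type*} (G : SimpleGraph V) : ℕ :=
  sInf { m : ℕ | ∃ C : G.Coloring (Fin (chromNum G)), ∃ i : Fin (chromNum G),
    m = {v | C v = i}.ncard }

/-- `τ(G)` : the minimum, over all proper `χ(G)`-colorings of `G` having a color class `U_j`
of size `s(G)`, over all vertices `v ∈ U_j` and all other color classes `U_i`, of the number
of neighbors of `v` in `U_i`. -/
noncomputable def tauNum {V : Type*} (G : SimpleGraph V) : ℕ :=
  sInf { m : ℕ | ∃ C : G.Coloring (Fin (chromNum G)), ∃ j : Fin (chromNum G),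
    {v | C v = j}.ncard = minClassSize G ∧
    ∃ v, C v = j ∧ ∃ i : Fin (chromNum G), i ≠ j ∧ m = {u | C u = i ∧ G.Adj v u}.ncard }

/-!
Put `s = s(G)` and `n = |V(H)|`, and split `(χ(G) - 1) (n - 1) + s - 1` vertices into `χ(G)` parts,
one of size `s - 1` and the others of size `n - 1`. Color an edge red when it joins two different
parts and blue otherwise. A blue copy of the connected graph `H` would lie inside a single part, and
all parts have fewer than `n` vertices since `s ≤ n`. A red copy of `G` would be properly
`χ(G)`-colored by the parts, with a color class of fewer than `s` vertices.

The set of `N` with `N → (G, H)` has to be nonempty for its infimum to be a genuine minimum rather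
than the junk value `0`; this is Ramsey's theorem, with the Erdős–Szekeres bound.
-/

section Ramsey

theorem ncard_lt_choose_of_cliqueFreeOn {α : Type*} {R : SimpleGraph α} {a b : ℕ} {s : Set α}
    (hs : s.Finite) (hR : R.CliqueFreeOn s a) (hB : Rᶜ.CliqueFreeOn s b) :
    s.ncard < (a + b).choose a := by
  induction a generalizing b s with
  | zero => exact absurd (by simp) (@hR ∅ (by simp))
  | succ a iha =>
    induction b generalizing s with
    | zero => exact absurd (by simp) (@hB ∅ (by simp))
    | succ b ihb =>
      obtain rfl | ⟨v, hv⟩ := s.eq_empty_or_nonempty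
      · simpa using Nat.choose_pos (Nat.le_add_right (a + 1) (b + 1))
      have hred : (s ∩ R.neighborSet v).ncard < (a + (b + 1)).choose a :=
        iha (hs.inter_of_left _) (hR.of_succ _ hv) (hB.subset _ Set.inter_subset_left)
      have hblue : (s ∩ Rᶜ.neighborSet v).ncard < (a + 1 + b).choose (a + 1) :=
        ihb (hs.inter_of_left _) (hR.subset _ Set.inter_subset_left) (hB.of_succ _ hv)
      have hcover : s ⊆ insert v (s ∩ R.neighborSet v ∪ s ∩ Rᶜ.neighborSet v) := fun w hw => by
        by_cases hvw : v = w <;> by_cases hadj : R.Adj v w <;> simp_all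
      have hcard : s.ncard ≤ (s ∩ R.neighborSet v).ncard + (s ∩ Rᶜ.neighborSet v).ncard + 1 :=
        (Set.ncard_le_ncard hcover
          (((hs.inter_of_left _).union (hs.inter_of_left _)).insert v)).trans <|
        (Set.ncard_insert_le _ _).trans <| Nat.add_le_add_right (Set.ncard_union_le _ _) 1
      have hpascal : (a + 1 + (b + 1)).choose (a + 1) =
          (a + (b + 1)).choose a + (a + 1 + b).choose (a + 1) := by
        rw [show a + 1 + (b + 1) = a + 1 + b + 1 by ring, Nat.choose_succ_succ,
          show a + 1 + b = a + (b + 1) by ring]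
      lia

theorem containsCopy_of_not_cliqueFree {V W : Type*} [Fintype W] {F : SimpleGraph V}
    (G : SimpleGraph W) (h : ¬F.CliqueFree (Fintype.card W)) : containsCopy F G := by
  rw [cliqueFree_iff_top_free, not_free] at h
  obtain ⟨f⟩ := h.mono_left (le_top : G ≤ ⊤)
  exact ⟨f.toHom, f.injective⟩

theorem arrows_choose {V W : Type*} [Fintype V] [Fintype W] (G : SimpleGraph V)
    (H : SimpleGraph W) :
    arrows ((Fintype.card V + Fintype.card W).choose (Fintype.card V)) G H := by
  intro R
  by_contra! h
  have hR : R.CliqueFree (Fintype.card V) := not_not.1 (mt (containsCopy_of_not_cliqueFree G) h.1)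
  have hB : Rᶜ.CliqueFree (Fintype.card W) :=
    not_not.1 (mt (containsCopy_of_not_cliqueFree H) h.2)
  simpa using ncard_lt_choose_of_cliqueFreeOn Set.finite_univ hR.cliqueFreeOn hB.cliqueFreeOn

end Ramsey

section MinClassSize

variable {V : Type*} {G : SimpleGraph V}

theorem minClassSize_le_ncard (C : G.Coloring (Fin (chromNum G))) (i : Fin (chromNum G)) :
    minClassSize G ≤ {v | C v = i}.ncard :=
  Nat.sInf_le ⟨C, i, rfl⟩

theorem surjective_of_coloring_chromNum (C : G.Coloring (Fin (chromNum G))) :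
    Function.Surjective C := by
  have hcol : G.Colorable (chromNum G) := ⟨C⟩
  have hfin : G.chromaticNumber ≠ ⊤ := chromaticNumber_ne_top_iff_exists.2 ⟨_, hcol⟩
  exact (chromaticNumber_eq_iff_forall_surjective hcol).1 (ENat.natCast_toNat hfin).symm C

theorem minClassSize_pos_iff [Finite V] : 0 < minClassSize G ↔ 0 < chromNum G := by
  constructor
  · intro hs
    obtain ⟨_, _, i, _⟩ := Nat.nonempty_of_pos_sInf hs
    exact i.pos
  · intro hχ
    obtain ⟨C₀⟩ : G.Colorable (chromNum G) := G.colorable_chromaticNumber_of_fintype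
    obtain ⟨C, i, hCi⟩ : minClassSize G ∈ { m : ℕ | ∃ C : G.Coloring (Fin (chromNum G)),
        ∃ i : Fin (chromNum G), m = {v | C v = i}.ncard } :=
      Nat.sInf_mem ⟨_, C₀, ⟨0, hχ⟩, rfl⟩
    rw [hCi, Set.ncard_pos]
    exact surjective_of_coloring_chromNum C i

end MinClassSize

section Multipartite

theorem exists_forall_ncard_fiber_le {α ι : Type*} [Fintype α] [Fintype ι] {b : ι → ℕ}
    (hb : Fintype.card α ≤ ∑ i, b i) : ∃ c : α → ι, ∀ i, {a | c a = i}.ncard ≤ b i := by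
  obtain ⟨e⟩ : Nonempty (α ↪ Σ i, Fin (b i)) :=
    Function.Embedding.nonempty_of_card_le (by simpa using hb)
  refine ⟨fun a => (e a).1, fun i => ?_⟩
  calc {a | (e a).1 = i}.ncard ≤ (Set.range (Sigma.mk (β := fun i => Fin (b i)) i)).ncard :=
        Set.ncard_le_ncard_of_injOn e (fun a ha => by simpa [Set.range_sigmaMk] using ha)
          e.injective.injOn
    _ = b i := by simp [← Set.image_univ, Set.ncard_image_of_injective _ sigma_mk_injective]

theorem eq_of_reachable_of_forall_adj {V ι : Type*} {G : SimpleGraph V} {g : V → ι}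
    (hg : ∀ v w, G.Adj v w → g v = g w) {v w : V} (h : G.Reachable v w) : g v = g w := by
  obtain ⟨p⟩ := h
  induction p with
  | nil => rfl
  | cons hadj _ ih => exact (hg _ _ hadj).trans ih

variable {α V W : Type*} [Finite α] {G : SimpleGraph V} {H : SimpleGraph W}

theorem minClassSize_le_ncard_fiber {c : α → Fin (chromNum G)}
    (h : containsCopy ((completeGraph _).comap c) G) (i : Fin (chromNum G)) :
    minClassSize G ≤ {a | c a = i}.ncard := by
  obtain ⟨f, hf⟩ := h
  let C : G.Coloring (Fin (chromNum G)) := (Hom.comap c _).comp f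
  exact (minClassSize_le_ncard C i).trans <|
    Set.ncard_le_ncard_of_injOn f (fun _ hv => hv) hf.injOn

theorem exists_card_le_ncard_fiber [Fintype W] (hH : H.Connected) {ι : Type*} {c : α → ι}
    (h : containsCopy ((completeGraph ι).comap c)ᶜ H) :
    ∃ i, Fintype.card W ≤ {a | c a = i}.ncard := by
  obtain ⟨f, hf⟩ := h
  obtain ⟨w⟩ := hH.nonempty
  have hadj : ∀ u v, H.Adj u v → c (f u) = c (f v) := fun u v huv => by
    simpa using ((compl_adj _ _ _).1 (f.map_adj huv)).2
  refine ⟨c (f w), ?_⟩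
  rw [← Nat.card_eq_fintype_card, ← Set.ncard_univ]
  exact Set.ncard_le_ncard_of_injOn f
    (fun v _ => eq_of_reachable_of_forall_adj hadj (hH.preconnected v w)) hf.injOn

theorem not_arrows_of_ncard_fiber_lt [Fintype W] (hH : H.Connected) {N : ℕ}
    {c : Fin N → Fin (chromNum G)} (hW : ∀ i, {a | c a = i}.ncard < Fintype.card W)
    {i₀ : Fin (chromNum G)} (hs : {a | c a = i₀}.ncard < minClassSize G) : ¬arrows N G H := by
  intro h
  rcases h ((completeGraph _).comap c) with hred | hblue
  · exact (minClassSize_le_ncard_fiber hred i₀).not_gt hs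
  · obtain ⟨i, hi⟩ := exists_card_le_ncard_fiber hH hblue
    exact hi.not_gt (hW i)

theorem not_arrows_of_lt [Finite V] [Fintype W] (hH : H.Connected)
    (hcard : minClassSize G ≤ Fintype.card W) {N : ℕ}
    (hN : N < (chromNum G - 1) * (Fintype.card W - 1) + minClassSize G) : ¬arrows N G H := by
  have hW : 0 < Fintype.card W := Fintype.card_pos_iff.2 hH.nonempty
  have hs_iff : 0 < minClassSize G ↔ 0 < chromNum G := minClassSize_pos_iff
  rcases (chromNum G).eq_zero_or_pos with hχ | hχ
  · have hs₀ : minClassSize G = 0 := by simpa [hχ] using hs_iff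
    simp [hχ, hs₀] at hN
  have hs : 0 < minClassSize G := hs_iff.2 hχ
  let i₀ : Fin (chromNum G) := ⟨0, hχ⟩
  let b : Fin (chromNum G) → ℕ :=
    Function.update (fun _ => Fintype.card W - 1) i₀ (minClassSize G - 1)
  have hb : Fintype.card (Fin N) ≤ ∑ i, b i := by
    simp only [b, Finset.sum_update_of_mem (Finset.mem_univ i₀), Finset.sum_const,
      Finset.card_univ_sdiff, Finset.card_singleton, Fintype.card_fin, smul_eq_mul]
    lia
  have hb₀ : b i₀ < minClassSize G := by simpa [b] using hs
  have hbW : ∀ i, b i < Fintype.card W := fun i => by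
    rcases eq_or_ne i i₀ with rfl | hi
    · exact hb₀.trans_le hcard
    · simpa [b, hi] using hW
  obtain ⟨c, hc⟩ := exists_forall_ncard_fiber_le hb
  exact not_arrows_of_ncard_fiber_lt hH (fun i => (hc i).trans_lt (hbW i))
    ((hc i₀).trans_lt hb₀)

end Multipartite

theorem statement_5 {V W : Type*} [Fintype V] [Fintype W]
    (G : SimpleGraph V) (H : SimpleGraph W)
    (hH : H.Connected) (hcard : minClassSize G ≤ Fintype.card W) :
    (chromNum G - 1) * (Fintype.card W - 1) + minClassSize G ≤ ramseyNumber G H := by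
  refine le_csInf ⟨_, Nat.choose_pos (Nat.le_add_right _ _), arrows_choose G H⟩ ?_
  rintro N ⟨-, hN⟩
  exact not_lt.1 fun hlt => not_arrows_of_lt hH hcard hlt hN
end

section
/- Let G and H be graphs and let n be a positive integer. Then R(G, nH) ≤ (n − 1)·|V(H)| + R(G, H), where nH denotes the disjoint union of n copies of H. -/
open SimpleGraph

/-- `nCopies n H` : the disjoint union of `n` vertex-disjoint copies of `H`. -/
def nCopies (n : ℕ) {W : Type*} (H : SimpleGraph W) : SimpleGraph (Fin n × W) :=
  SimpleGraph.fromRel (fun a b => a.1 = b.1 ∧ H.Adj a.2 b.2)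

/-!
In a colouring of a large enough complete graph without a red copy of `G`, find a blue copy of `K`
and delete its `|V(K)|` vertices; if at least `R(G, H)` vertices remain, they carry a blue copy of
`H` disjoint from the first one. Hence `R(G, K ⊔ H) ≤ max (R(G, K)) (|V(K)| + R(G, H))`, and peeling
off one copy of `H` at a time gives the bound for `nH`.
-/

section Copies

variable {U V W : Type*} {F : SimpleGraph V} {K : SimpleGraph U} {H : SimpleGraph W}

theorem containsCopy_iff_isContained : containsCopy F H ↔ H ⊑ F :=
  ⟨fun ⟨f, hf⟩ ↦ ⟨f.toCopy hf⟩, fun ⟨f⟩ ↦ ⟨f.toHom, f.injective⟩⟩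

theorem sum_isContained_of_disjoint_range (f : Copy K F) (g : Copy H F)
    (hfg : Disjoint (Set.range f) (Set.range g)) : K ⊕g H ⊑ F := by
  refine ⟨⟨⟨Sum.elim f g, ?_⟩, ?_⟩⟩
  · rintro (u | w) (u' | w') h
    · exact f.toHom.map_adj (sum_adj_inl.1 h)
    · cases h
    · cases h
    · exact g.toHom.map_adj (sum_adj_inr.1 h)
  · exact f.injective.sumElim g.injective (Set.disjoint_range_iff.1 hfg)

end Copies

section DisjointCopies

variable {W : Type*}

theorem nCopies_adj {n : ℕ} {H : SimpleGraph W} {p q : Fin n × W} :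
    (nCopies n H).Adj p q ↔ p.1 = q.1 ∧ H.Adj p.2 q.2 := by
  simp only [nCopies, fromRel_adj, H.adj_comm q.2, eq_comm (a := q.1), or_self,
    and_iff_right_iff_imp]
  rintro ⟨-, h⟩ rfl
  exact h.ne rfl

/-- A single copy of `H` is `H` itself: the base of the induction on the number of copies. -/
def nCopiesOneIso (H : SimpleGraph W) : nCopies 1 H ≃g H where
  toEquiv := Equiv.uniqueProd W (Fin 1)
  map_rel_iff' {p q} := by simp [nCopies_adj, Subsingleton.elim p.1 q.1]

/-- The copies of `H` in `(m + n)H` split into the first `m` and the last `n`. -/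
def nCopiesAddIso (m n : ℕ) (H : SimpleGraph W) :
    nCopies (m + n) H ≃g nCopies m H ⊕g nCopies n H :=
  Iso.symm
    { toEquiv := (Equiv.sumProdDistrib (Fin m) (Fin n) W).symm.trans
        (Equiv.prodCongrLeft fun _ ↦ finSumFinEquiv)
      map_rel_iff' := by
        rintro (p | p) (q | q) <;>
          simp [nCopies_adj, -finSumFinEquiv_apply_left, -finSumFinEquiv_apply_right] }

/-- The decomposition `(n + 1)H ≅ nH ⊔ H` used to peel off one copy of `H`. -/
def nCopiesSuccIso (n : ℕ) (H : SimpleGraph W) : nCopies (n + 1) H ≃g nCopies n H ⊕g H :=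
  (Iso.sumCongr Iso.refl (nCopiesOneIso H)).comp (nCopiesAddIso n 1 H)

end DisjointCopies

section Arrows

variable {U V W X : Type*} {M N : ℕ} {G : SimpleGraph V} {H : SimpleGraph W} {K : SimpleGraph U}

theorem arrows.mono_right (h : arrows N G H) (hKH : K ⊑ H) : arrows N G K := fun R ↦
  (h R).imp_right fun hH ↦
    containsCopy_iff_isContained.2 (hKH.trans (containsCopy_iff_isContained.1 hH))

theorem arrows.isContained_or_isContained_compl [Fintype X] (h : arrows N G H)
    (hN : N ≤ Fintype.card X) (R : SimpleGraph X) : G ⊑ R ∨ H ⊑ Rᶜ := by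
  obtain ⟨e⟩ : Nonempty (Fin N ↪ X) := Function.Embedding.nonempty_of_card_le (by simpa using hN)
  let i : R.comap e ↪g R := Embedding.comap e R
  exact (h (R.comap e)).imp
    (fun hG ↦ (containsCopy_iff_isContained.1 hG).trans i.isContained)
    (fun hH ↦ (containsCopy_iff_isContained.1 hH).trans (Embedding.complEquiv i).isContained)

theorem arrows.sum [Fintype U] (hK : arrows M G K) (hH : arrows N G H) :
    arrows (max M (Fintype.card U + N)) G (K ⊕g H) := by
  classical
  intro R
  simp only [containsCopy_iff_isContained]
  obtain hG | ⟨⟨f⟩⟩ := hK.isContained_or_isContained_compl (by simp) R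
  · exact .inl hG
  let S : Set (Fin (max M (Fintype.card U + N))) := (Set.range f)ᶜ
  have hS : N ≤ Fintype.card S := by
    have hf : Fintype.card (Set.range f) = Fintype.card U :=
      Set.card_range_of_injective f.injective
    rw [Fintype.card_compl_set, hf, Fintype.card_fin]
    omega
  obtain hG | ⟨⟨g⟩⟩ := hH.isContained_or_isContained_compl hS (R.induce S)
  · exact .inl (hG.trans (Embedding.induce S).isContained)
  · refine .inr (sum_isContained_of_disjoint_range f
      ((Embedding.complEquiv (Embedding.induce S)).toCopy.comp g) ?_)
    exact Set.disjoint_right.2 (Set.range_subset_iff.2 fun w ↦ (g w).2)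

end Arrows

section RamseyNumber

variable {U V W : Type*} {N : ℕ} {G : SimpleGraph V} {H : SimpleGraph W} {K : SimpleGraph U}

theorem ramseyNumber_le (hN : 0 < N) (h : arrows N G H) : ramseyNumber G H ≤ N :=
  Nat.sInf_le ⟨hN, h⟩

theorem ramseyNumber_spec (hN : 0 < N) (h : arrows N G H) :
    0 < ramseyNumber G H ∧ arrows (ramseyNumber G H) G H :=
  Nat.sInf_mem (s := {N | 0 < N ∧ arrows N G H}) ⟨N, hN, h⟩

theorem arrows_ramseyNumber_of_pos (h : 0 < ramseyNumber G H) : arrows (ramseyNumber G H) G H :=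
  (Nat.sInf_mem (Nat.nonempty_of_pos_sInf h)).2

theorem ramseyNumber_congr_right (e : H ≃g K) : ramseyNumber G H = ramseyNumber G K := by
  have h : ∀ N, arrows N G H ↔ arrows N G K := fun N ↦
    ⟨fun h ↦ h.mono_right e.isContained', fun h ↦ h.mono_right e.isContained⟩
  simp only [ramseyNumber, h]

theorem ramseyNumber_sum_le [Fintype U] (G : SimpleGraph V) (K : SimpleGraph U)
    (H : SimpleGraph W) :
    ramseyNumber G (K ⊕g H) ≤ max (ramseyNumber G K) (Fintype.card U + ramseyNumber G H) := by
  -- `ramseyNumber` is the junk value `0` when no `N` arrows the pair.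
  obtain h_zero | h_pos := Nat.eq_zero_or_pos (ramseyNumber G (K ⊕g H))
  · simp [h_zero]
  have h := arrows_ramseyNumber_of_pos h_pos
  obtain ⟨hK_pos, hK⟩ := ramseyNumber_spec h_pos (h.mono_right Embedding.sumInl.isContained)
  obtain ⟨-, hH⟩ := ramseyNumber_spec h_pos (h.mono_right Embedding.sumInr.isContained)
  exact ramseyNumber_le (lt_max_of_lt_left hK_pos) (hK.sum hH)

end RamseyNumber

theorem statement_6_general {V W : Type*} [Fintype W]
    (G : SimpleGraph V) (H : SimpleGraph W) (n : ℕ) (hn : 0 < n) :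
    ramseyNumber G (nCopies n H) ≤ (n - 1) * Fintype.card W + ramseyNumber G H := by
  induction n, hn using Nat.le_induction with
  | base => simp [ramseyNumber_congr_right (nCopiesOneIso H)]
  | succ n _ ih =>
    calc ramseyNumber G (nCopies (n + 1) H)
        = ramseyNumber G (nCopies n H ⊕g H) := ramseyNumber_congr_right (nCopiesSuccIso n H)
      _ ≤ max (ramseyNumber G (nCopies n H)) (Fintype.card (Fin n × W) + ramseyNumber G H) :=
          ramseyNumber_sum_le ..
      _ ≤ n * Fintype.card W + ramseyNumber G H := by
          rw [Fintype.card_prod, Fintype.card_fin]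
          exact max_le (ih.trans (by gcongr; omega)) le_rfl

theorem statement_6 {V W : Type*} [Fintype V] [Fintype W]
    (G : SimpleGraph V) (H : SimpleGraph W) (n : ℕ) (hn : 0 < n) :
    ramseyNumber G (nCopies n H) ≤ (n - 1) * Fintype.card W + ramseyNumber G H :=
  statement_6_general G H n hn
end

section
/- Let G be an edge-critical graph. Then τ(G) = 1. -/
open SimpleGraph

/-! If `uv` is an edge with `χ(G - uv) < χ(G)`, take a `χ(G)`-coloring of `G - uv` that misses a
color `j`. It gives `u` and `v` the same color, as otherwise it would properly color `G` with fewer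
than `χ(G)` colors. Moving `u` to the color `j` yields a coloring of `G` with color class `{u}`, in
which `v` is the only neighbor of `u` in its class, so `s(G) = 1` and `τ(G) ≤ 1`. Conversely, the
vertex of a singleton class has a neighbor in every other class, since otherwise it could be moved
there, and one color would be saved. -/

section Recolor

variable {V α : Type*} {G : SimpleGraph V} {u v : V}

/-- The coloring of `G` obtained from a coloring of `G` without the edges at `v` by changing the
color of `v` to a color `i` that does not occur among the neighbors of `v`. -/
def recolorVertex [DecidableEq V] (c : (G.deleteIncidenceSet v).Coloring α) (i : α)
    (hi : ∀ x, G.Adj v x → c x ≠ i) : G.Coloring α :=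
  Coloring.mk (Function.update c v i) fun {a b} hab ↦ by
    rcases eq_or_ne a v with rfl | ha
    · simpa [hab.ne'] using (hi b hab).symm
    rcases eq_or_ne b v with rfl | hb
    · simpa [hab.ne] using hi a hab.symm
    simpa [ha, hb] using c.valid (deleteIncidenceSet_adj.2 ⟨hab, ha, hb⟩)

theorem recolorVertex_self [DecidableEq V] (c : (G.deleteIncidenceSet v).Coloring α) (i : α)
    (hi : ∀ x, G.Adj v x → c x ≠ i) : recolorVertex c i hi v = i :=
  Function.update_self (β := fun _ ↦ α) v i c

theorem recolorVertex_of_ne [DecidableEq V] (c : (G.deleteIncidenceSet v).Coloring α) (i : α)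
    (hi : ∀ x, G.Adj v x → c x ≠ i) {x : V} (hx : x ≠ v) : recolorVertex c i hi x = c x :=
  Function.update_of_ne (β := fun _ ↦ α) hx i c

theorem exists_adj_of_colorClass_eq_singleton (hG : ∀ C : G.Coloring α, Function.Surjective C)
    {C : G.Coloring α} (hv : {x | C x = C v} = {v}) {i : α} (hi : i ≠ C v) :
    ∃ x, C x = i ∧ G.Adj v x := by
  classical
  by_contra! hno
  let C' := recolorVertex (C.comap (Hom.ofLE (G.deleteIncidenceSet_le v))) i
    fun x hx hxi ↦ hno x hxi hx
  obtain ⟨x, hx⟩ := hG C' (C v)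
  rcases eq_or_ne x v with rfl | hxv
  · exact hi ((recolorVertex_self ..).symm.trans hx)
  · have hCx : C x = C v := (recolorVertex_of_ne _ _ _ hxv).symm.trans hx
    exact hxv (hv.subset hCx)

theorem color_eq_of_not_surjective_deleteEdges
    (hG : ∀ C : G.Coloring α, Function.Surjective C)
    {c : (G.deleteEdges {s(u, v)}).Coloring α} (hc : ¬ Function.Surjective c) : c u = c v := by
  by_contra hne
  refine hc (hG (Coloring.mk c fun {a b} hab ↦ ?_))
  by_cases he : s(a, b) = s(u, v)
  · rcases Sym2.eq_iff.1 he with ⟨rfl, rfl⟩ | ⟨rfl, rfl⟩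
    exacts [hne, Ne.symm hne]
  · exact c.valid (deleteEdges_adj.2 ⟨hab, he⟩)

theorem exists_coloring_colorClass_eq_singleton (hG : ∀ C : G.Coloring α, Function.Surjective C)
    (huv : G.Adj u v) {c : (G.deleteEdges {s(u, v)}).Coloring α}
    (hc : ¬ Function.Surjective c) :
    ∃ C : G.Coloring α, {x | C x = C u} = {u} ∧
      ∃ i ≠ C u, {x | C x = i ∧ G.Adj u x} = {v} := by
  classical
  obtain ⟨j, hj⟩ : ∃ j, ∀ x, c x ≠ j := by simpa [Function.Surjective] using hc
  have hcuv : c u = c v := color_eq_of_not_surjective_deleteEdges hG hc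
  have hle : G.deleteIncidenceSet u ≤ G.deleteEdges {s(u, v)} :=
    deleteEdges_anti (Set.singleton_subset_iff.2 ((mk'_mem_incidenceSet_left_iff G).2 huv))
  let C := recolorVertex (c.comap (Hom.ofLE hle)) j fun x _ ↦ hj x
  have hCu : C u = j := recolorVertex_self ..
  have hC {x : V} (hx : x ≠ u) : C x = c x := recolorVertex_of_ne _ _ _ hx
  refine ⟨C, ?_, c v, hCu ▸ hj v, ?_⟩
  · refine Set.eq_singleton_iff_unique_mem.2 ⟨rfl, fun x hx ↦ ?_⟩
    by_contra hxu
    exact hj x ((hC hxu).symm.trans (hx.trans hCu))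
  · refine Set.eq_singleton_iff_unique_mem.2 ⟨⟨hC huv.ne', huv⟩, fun x ⟨hx, hux⟩ ↦ ?_⟩
    by_contra hxv
    have hadj : (G.deleteEdges {s(u, v)}).Adj u x :=
      deleteEdges_adj.2 ⟨hux, fun h ↦ hxv (Sym2.congr_right.1 h)⟩
    exact c.valid hadj (hcuv.trans (hx.symm.trans (hC hux.ne')))

end Recolor

section ChromNum

variable {V : Type*} {G : SimpleGraph V}

theorem exists_coloring_not_surjective_of_chromaticNumber_lt {n : ℕ}
    (hn : G.chromaticNumber < n) : ∃ C : G.Coloring (Fin n), ¬ Function.Surjective C :=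
  not_forall.1 fun h ↦ hn.not_ge (le_chromaticNumber_iff_forall_surjective.2 h)

theorem EdgeCritical.exists_chromaticNumber_deleteEdges_lt [Finite V] (hG : EdgeCritical G) :
    ∃ u v, G.Adj u v ∧ (G.deleteEdges {s(u, v)}).chromaticNumber < chromNum G := by
  obtain ⟨u, v, huv, hχ⟩ := hG
  have hfin {H : SimpleGraph V} : H.chromaticNumber ≠ ⊤ :=
    chromaticNumber_ne_top_iff_exists.2 ⟨_, H.colorable_chromaticNumber_of_fintype⟩
  refine ⟨u, v, huv, ?_⟩
  rw [chromNum, ENat.natCast_toNat hfin, ← hχ]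
  exact (ENat.lt_add_one_iff hfin).2 le_rfl

theorem minClassSize_eq_one [Finite V] {C : G.Coloring (Fin (chromNum G))}
    {j : Fin (chromNum G)} (hj : {x | C x = j}.ncard = 1) : minClassSize G = 1 := by
  refine IsLeast.csInf_eq ⟨⟨C, j, hj.symm⟩, ?_⟩
  rintro _ ⟨D, i, rfl⟩
  exact (Set.ncard_pos).2 (surjective_of_coloring_chromNum D i)

theorem tauNum_eq_one [Finite V] {C : G.Coloring (Fin (chromNum G))} {v : V}
    (hv : {x | C x = C v}.ncard = 1) {i : Fin (chromNum G)} (hi : i ≠ C v)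
    (hvi : {x | C x = i ∧ G.Adj v x}.ncard = 1) : tauNum G = 1 := by
  have hs : minClassSize G = 1 := minClassSize_eq_one hv
  refine IsLeast.csInf_eq ⟨⟨C, C v, hv.trans hs.symm, v, rfl, i, hi, hvi.symm⟩, ?_⟩
  rintro _ ⟨D, _, hj, w, rfl, k, hk, rfl⟩
  obtain ⟨z, hz⟩ := Set.ncard_eq_one.1 (hj.trans hs)
  have hwz : w = z := hz.subset rfl
  have hw : {x | D x = D w} = {w} := by rw [hz, hwz]
  exact (Set.ncard_pos).2
    (exists_adj_of_colorClass_eq_singleton surjective_of_coloring_chromNum hw hk)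

end ChromNum

theorem statement_11 {V : Type*} [Fintype V] (G : SimpleGraph V)
    (hcrit : EdgeCritical G) : tauNum G = 1 := by
  obtain ⟨u, v, huv, hlt⟩ := hcrit.exists_chromaticNumber_deleteEdges_lt
  obtain ⟨c, hc⟩ := exists_coloring_not_surjective_of_chromaticNumber_lt hlt
  obtain ⟨C, hu, i, hi, hui⟩ :=
    exists_coloring_colorClass_eq_singleton surjective_of_coloring_chromNum huv hc
  exact tauNum_eq_one (Set.ncard_eq_one.2 ⟨u, hu⟩) hi (Set.ncard_eq_one.2 ⟨v, hui⟩)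
end

section
/- Let G be a graph with χ(G) = p + 1. For every ξ > 0 there exist δ = δ(ξ) > 0 and n₀ = n₀(δ) > 0 such that: if H is a graph of order N > n₀ with more than (p−1)N²/(2p) − δN² edges that does not contain G as a subgraph, then there is a partition of V(H) into classes V₁, …, V_p such that (1) Σ_{1≤i<j≤p} (|V_i||V_j| − e_H(V_i,V_j)) < ξN², where e_H(V_i,V_j) is the number of edges of H with one end in V_i and the other in V_j; (2) Σ_{i=1}^{p} e_H(V_i) < ξN², where e_H(V_i) is the number of edges of H with both ends in V_i; (3) for every vertex v ∈ V_i and all i, j ∈ {1,…,p}, the number of neighbors of v in V_i is at most the number of neighbors of v in V_j; and (4) N/p − ξN < |V_i| < N/p + ξN for each i ∈ {1,…,p}. -/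
open SimpleGraph

/-- `crossEdges H A B` : the number of edges of `H` with one endpoint in `A` and the
other endpoint in `B` (for `A = B`, the number of edges with both endpoints in `A`). -/
noncomputable def crossEdges {N : ℕ} (H : SimpleGraph (Fin N)) (A B : Set (Fin N)) : ℕ :=
  {e : Sym2 (Fin N) | e ∈ H.edgeSet ∧ ∃ u ∈ A, ∃ v ∈ B, e = s(u, v)}.ncard

/-! Since `G` is contained in the complete `(p + 1)`-partite graph `K_{p+1}(s)` with parts of size
`s = |G|`, the graph `H` contains no `K_{p+1}(s)` either. The edge count yields a set `S` of almost
all vertices inducing a graph of minimum degree about `(1 - 1/p)|S|`, and by Erdős–Stone `S`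
contains `p` large sets that are completely joined to one another. As there is no `K_{p+1}(s)`, a
degree count shows that almost every vertex of `S` has few non-neighbours in all but one of these
sets; classify the vertices by this exceptional set. Two vertex sets of size `s` in the same class
are not completely joined, for together with common neighbours in the other `p - 1` sets they would
form a `K_{p+1}(s)`. So there are `o(n²)` edges inside the classes, which is (2), and (2) persists
for the partition with fewest inner edges, which satisfies (3). Finally, for classes of sizes `n_i`,
`2 ∑_{i<j} (n_i n_j - e(V_i, V_j)) + ∑ (n_i - n/p)² = (1 - 1/p) n² - 2 e(H) + 2 ∑ e(V_i)`,
whose right-hand side is small, so each of the two nonnegative sums is, giving (1) and (4). -/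

section

open Finset

variable {V : Type*} (H : SimpleGraph V)

lemma containsCopy_iff_isContained_s12 {U : Type*} {G : SimpleGraph U} :
    containsCopy H G ↔ G ⊑ H :=
  ⟨fun ⟨f, hf⟩ => ⟨⟨f, hf⟩⟩, fun ⟨f⟩ => ⟨f.toHom, f.injective⟩⟩

/-- The graph of the edges of `H` whose two ends receive the same colour from `c`, i.e. the edges
inside the classes of the partition given by `c`. -/
def monochromatic {κ : Type*} (c : V → κ) : SimpleGraph V :=
  H \ (⊤ : SimpleGraph κ).comap c

variable {H}

lemma monochromatic_adj {κ : Type*} {c : V → κ} {u v : V} :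
    (monochromatic H c).Adj u v ↔ H.Adj u v ∧ c u = c v := by
  simp [monochromatic]

instance {κ : Type*} [DecidableEq κ] [DecidableRel H.Adj] (c : V → κ) :
    DecidableRel (monochromatic H c).Adj :=
  fun _ _ => decidable_of_iff' _ monochromatic_adj

lemma isContained_completeEquipartiteGraph_card_of_colorable {U : Type*} [Fintype U]
    {G : SimpleGraph U} {k : ℕ} (hG : G.Colorable k) :
    G ⊑ completeEquipartiteGraph k (Fintype.card U) := by
  classical
  obtain ⟨C⟩ := hG
  exact isContained_completeEquipartiteGraph_of_colorable C _ fun c =>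
    set_fintype_card_le_univ (C.colorClass c)

lemma isContained_succ_of_isCompleteBetween {r t : ℕ} {A : Finset V} {P : Fin r → Finset V}
    (hA : t ≤ #A) (hP : ∀ i, t ≤ #(P i)) (hAP : ∀ i, H.IsCompleteBetween A (P i))
    (hPP : Pairwise fun i j => H.IsCompleteBetween (P i) (P j)) :
    completeEquipartiteGraph (r + 1) t ⊑ H := by
  let Q : Fin (r + 1) → Finset V := Fin.cons A P
  have hQ : ∀ i, t ≤ #(Q i) := Fin.cases hA hP
  have hQQ : Pairwise fun i j => H.IsCompleteBetween (Q i) (Q j) := fun i j hij => by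
    cases i using Fin.cases with
    | zero =>
      cases j using Fin.cases with
      | zero => exact absurd rfl hij
      | succ j => exact hAP j
    | succ i =>
      cases j using Fin.cases with
      | zero => exact (hAP i).symm
      | succ j => exact hPP (ne_of_apply_ne Fin.succ hij)
  have hemb : ∀ i, ∃ f : Fin t ↪ V, ∀ a, f a ∈ Q i := fun i => by
    obtain ⟨R, hRQ, hR⟩ := exists_subset_card_eq (hQ i)
    exact ⟨(R.equivFinOfCardEq hR).symm.toEmbedding.trans (.subtype _),
      fun a => hRQ (Subtype.coe_prop _)⟩
  choose f hf using hemb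
  refine ⟨⟨⟨fun x => f x.1 x.2, fun hxy => hQQ hxy (hf _ _) (hf _ _)⟩, ?_⟩⟩
  rintro ⟨i, a⟩ ⟨j, b⟩ (hab : f i a = f j b)
  obtain rfl : i = j := by
    by_contra hij
    exact (hQQ hij (hf i a) (hf j b)).ne hab
  rw [(f i).injective hab]

lemma completeEquipartiteGraph_one_isContained [Fintype V] {t : ℕ} (ht : t ≤ Fintype.card V) :
    completeEquipartiteGraph 1 t ⊑ H :=
  isContained_succ_of_isCompleteBetween (A := univ) (P := Fin.elim0) ht (fun i => i.elim0)
    (fun i => i.elim0) fun i => i.elim0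

lemma free_induce {W : Type*} {G : SimpleGraph W} (h : G.Free H) (S : Set V) :
    G.Free (H.induce S) :=
  fun hG => h (hG.trans ⟨(Embedding.induce S).toCopy⟩)

lemma exists_parts_of_isContained_induce {r t : ℕ} {S : Set V}
    (h : completeEquipartiteGraph r t ⊑ H.induce S) :
    ∃ P : Fin r → Finset V, (∀ i, ↑(P i) ⊆ S) ∧ (∀ i, #(P i) = t) ∧
      Pairwise fun i j => H.IsCompleteBetween (P i) (P j) := by
  obtain ⟨f⟩ := h
  have hinj : ∀ i, Function.Injective fun a => (f (i, a) : V) := fun i a b hab =>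
    (Prod.mk.inj (f.injective (Subtype.ext hab))).2
  refine ⟨fun i => univ.map ⟨_, hinj i⟩, fun i => ?_, fun i => by simp, fun i j hij => ?_⟩
  · simp [Set.range_subset_iff]
  · simp only [IsCompleteBetween, coe_map, coe_univ, Set.image_univ, Set.forall_mem_range]
    exact fun a b => f.toHom.map_adj
      (show (completeEquipartiteGraph r t).Adj (i, a) (j, b) from hij)

variable (H) [DecidableRel H.Adj]

lemma card_interedges_eq_sum (S T : Finset V) :
    #(H.interedges S T) = ∑ v ∈ S, #{w ∈ T | H.Adj v w} := by
  simp only [interedges_def, card_filter, sum_product]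

lemma card_interedges_eq_erase_add [DecidableEq V] {S : Finset V} {v : V} (hv : v ∈ S) :
    #(H.interedges S S) =
      #(H.interedges (S.erase v) (S.erase v)) + 2 * #{w ∈ S | H.Adj v w} := by
  have hrow : ∀ u, #{w ∈ S | H.Adj u w} =
      #{w ∈ S.erase v | H.Adj u w} + if H.Adj u v then 1 else 0 := fun u => by
    simp only [card_filter, ← sum_erase_add _ _ hv]
  have hcol : ∑ u ∈ S.erase v, (if H.Adj u v then 1 else 0) = #{w ∈ S | H.Adj v w} := by
    rw [hrow v, if_neg H.irrefl, add_zero, card_filter]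
    simp only [H.adj_comm]
  rw [card_interedges_eq_sum, card_interedges_eq_sum, ← sum_erase_add _ _ hv,
    sum_congr rfl fun u _ => hrow u, sum_add_distrib, hcol]
  ring

/- A maximiser of the potential works: deleting a vertex of degree `d` lowers the number of ordered
adjacent pairs by `2 * d` and `k * (k + 1)` by `2 * k`. -/
lemma exists_subset_forall_mul_card_le (T : Finset V) (α : ℝ) :
    ∃ S ⊆ T, (∀ v ∈ S, α * #S ≤ #{w ∈ S | H.Adj v w}) ∧
      #(H.interedges T T) - α * (#T * (#T + 1)) ≤
        #(H.interedges S S) - α * (#S * (#S + 1)) := by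
  classical
  obtain ⟨S, hS, hmax⟩ := T.powerset.exists_max_image
    (fun S => (#(H.interedges S S) - α * (#S * (#S + 1)) : ℝ)) ⟨T, mem_powerset_self T⟩
  rw [mem_powerset] at hS
  refine ⟨S, hS, fun v hv => ?_, hmax T (mem_powerset_self T)⟩
  have hle := hmax (S.erase v) (mem_powerset.mpr ((erase_subset v S).trans hS))
  rw [card_interedges_eq_erase_add H hv, ← card_erase_add_one hv] at hle
  rw [← card_erase_add_one hv]
  push_cast at hle ⊢
  linarith

variable {H}

lemma exists_isContained_induce_of_forall_mul_card_le {ε : ℝ} (hε : 0 < ε) (r t : ℕ) :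
    ∃ n₀ : ℕ, ∀ {V : Type*} {H : SimpleGraph V} [DecidableRel H.Adj] {S : Finset V},
      n₀ ≤ #S → (∀ v ∈ S, (1 - 1 / r + ε) * #S ≤ #{w ∈ S | H.Adj v w}) →
      completeEquipartiteGraph (r + 1) t ⊑ H.induce (S : Set V) := by
  obtain ⟨n₀, hn₀⟩ := Filter.eventually_atTop.mp
    (eventually_completeEquipartiteGraph_isContained_of_minDegree hε r t)
  refine ⟨max n₀ 1, fun {V H} _ {S} hS hdeg => ?_⟩
  let e : Fin #S ≃ S := S.equivFin.symm
  let f : Fin #S ↪ V := e.toEmbedding.trans (.subtype _)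
  have hmap : univ.map f = S := by
    rw [← Finset.map_map, map_univ_equiv, ← attach_eq_univ, attach_map_val]
  have hdegree : ∀ a, ((H.induce (S : Set V)).comap e).degree a = #{w ∈ S | H.Adj (f a) w} :=
    fun a => calc
      _ = #{b | H.Adj (f a) (f b)} := by
        rw [← card_neighborFinset_eq_degree, neighborFinset_eq_filter]; rfl
      _ = #{w ∈ univ.map f | H.Adj (f a) w} := by rw [filter_map, card_map]; rfl
      _ = #{w ∈ S | H.Adj (f a) w} := by rw [hmap]
  have : Nonempty (Fin #S) := Fin.pos_iff_nonempty.mp (le_of_max_le_right hS)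
  have hmin : ((H.induce (S : Set V)).comap e).minDegree ≥ (1 - 1 / r + ε) * #S := by
    obtain ⟨a, ha⟩ := ((H.induce (S : Set V)).comap e).exists_minimal_degree_vertex
    rw [ha, hdegree]
    exact hdeg _ (e a).2
  exact (hn₀ _ (le_of_max_le_left hS) hmin).trans ⟨(Iso.comap e _).toCopy⟩

lemma exists_card_interedges_le_of_free {η : ℝ} (hη : 0 < η) (r t : ℕ) :
    ∃ n₀ : ℕ, ∀ {V : Type*} {H : SimpleGraph V} [DecidableRel H.Adj] {S : Finset V} {n : ℕ},
      (completeEquipartiteGraph (r + 1) t).Free (H.induce (S : Set V)) → n₀ ≤ n → #S ≤ n →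
      (#(H.interedges S S) : ℝ) ≤ (1 - 1 / r) * #S ^ 2 + η * n ^ 2 := by
  obtain ⟨k, hk⟩ := exists_isContained_induce_of_forall_mul_card_le (half_pos hη) r t
  obtain ⟨n₀, hn₀⟩ := exists_nat_ge ((1 + η / 2 + k * k) / (η / 2))
  rw [div_le_iff₀ (half_pos hη)] at hn₀
  refine ⟨max n₀ 1, fun {V H} _ {T n} hfree hn hT => ?_⟩
  have hr : (0 : ℝ) ≤ 1 - 1 / r := by simpa using Nat.cast_inv_le_one r
  have hr' : 1 - 1 / (r : ℝ) ≤ 1 := by simp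
  generalize 1 - 1 / (r : ℝ) = β at hk hr hr' ⊢
  obtain ⟨S, hST, hdeg, hpot⟩ := exists_subset_forall_mul_card_le H T (β + η / 2)
  have hS : #S < k := by
    by_contra! hkS
    exact hfree ((hk hkS hdeg).trans ⟨(H.induceHomOfLE (coe_subset.mpr hST)).toCopy⟩)
  have hedges : (#(H.interedges S S) : ℝ) ≤ k * k := by
    exact_mod_cast (H.card_interedges_le_mul S S).trans (Nat.mul_le_mul hS.le hS.le)
  have hn₀n : (n₀ : ℝ) ≤ n := by exact_mod_cast le_of_max_le_left hn
  have hn1 : (1 : ℝ) ≤ n := by exact_mod_cast le_of_max_le_right hn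
  have hTn : (#T : ℝ) ≤ n := by exact_mod_cast hT
  have hn : 1 + η / 2 + k * k ≤ n * (η / 2) := hn₀.trans (by gcongr)
  calc (#(H.interedges T T) : ℝ)
      ≤ (β + η / 2) * (#T * (#T + 1)) + k * k := by
        have : 0 ≤ (β + η / 2) * (#S * (#S + 1)) := by positivity
        linarith
    _ = β * #T ^ 2 + η / 2 * #T ^ 2 + ((β + η / 2) * #T + k * k * 1) := by ring
    _ ≤ β * #T ^ 2 + η / 2 * n ^ 2 + ((1 + η / 2) * n + k * k * n) := by gcongr
    _ = β * #T ^ 2 + η / 2 * n ^ 2 + (1 + η / 2 + k * k) * n := by ring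
    _ ≤ β * #T ^ 2 + η / 2 * n ^ 2 + n * (η / 2) * n := by gcongr
    _ = β * #T ^ 2 + η * n ^ 2 := by ring

/-- The vertex `v` fits the `i`-th class of the family `P` if it has fewer than `q` non-neighbours
in every other part. -/
def FitsClass {r : ℕ} (H : SimpleGraph V) [DecidableRel H.Adj] (P : Fin r → Finset V) (q : ℕ)
    (v : V) (i : Fin r) : Prop :=
  ∀ j ≠ i, #{w ∈ P j | ¬ H.Adj v w} < q

instance {r : ℕ} (P : Fin r → Finset V) (q : ℕ) (v : V) (i : Fin r) :
    Decidable (FitsClass H P q v i) :=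
  inferInstanceAs (Decidable (∀ j ≠ i, #{w ∈ P j | ¬ H.Adj v w} < q))

lemma card_le_mul_add_card_common_neighbors {X Y : Finset V} {q : ℕ}
    (h : ∀ u ∈ Y, #{x ∈ X | ¬ H.Adj u x} ≤ q) :
    #X ≤ #Y * q + #{x ∈ X | ∀ u ∈ Y, H.Adj u x} := by
  classical
  have hcover : #{x ∈ X | ¬ ∀ u ∈ Y, H.Adj u x} ≤ #Y * q := by
    refine (card_le_card fun x hx => ?_).trans (card_biUnion_le_card_mul Y _ q h)
    simpa [and_comm, and_assoc, and_left_comm] using hx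
  rw [← card_filter_add_card_filter_not fun x => ∀ u ∈ Y, H.Adj u x]
  omega

/- By pigeonhole, `s` of these vertices share their neighbourhood in the union of the parts, and
extend the parts to a copy of `K_{r+1}(s)`. -/
lemma card_filter_forall_le_card_le_of_free {r s t : ℕ} {P : Fin r → Finset V} (S : Finset V)
    (hfree : (completeEquipartiteGraph (r + 1) s).Free H) (ht : ∀ i, #(P i) ≤ t)
    (hP : Pairwise fun i j => H.IsCompleteBetween (P i) (P j)) :
    #{v ∈ S | ∀ i, s ≤ #{w ∈ P i | H.Adj v w}} ≤ 2 ^ (r * t) * s := by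
  classical
  by_contra! hlt
  let X := univ.biUnion P
  let N := fun v => {w ∈ X | H.Adj v w}
  have hX : #X.powerset ≤ 2 ^ (r * t) := by
    rw [card_powerset]
    exact Nat.pow_le_pow_right two_pos
      ((card_biUnion_le_card_mul _ _ t fun i _ => ht i).trans (by simp))
  obtain ⟨Z, -, hZ⟩ := exists_lt_card_fiber_of_mul_lt_card_of_maps_to
    (f := N) (t := X.powerset) (fun v _ => mem_powerset.mpr (filter_subset _ X))
    ((Nat.mul_le_mul_right s hX).trans_lt hlt)
  obtain ⟨v, hv⟩ := card_pos.mp (Nat.zero_lt_of_lt hZ)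
  simp only [mem_filter] at hv
  refine hfree (isContained_succ_of_isCompleteBetween hZ.le hv.1.2 (fun i a ha b hb => ?_)
    fun i j hij a ha b hb => hP hij (mem_of_mem_filter a ha) (mem_of_mem_filter b hb))
  have hN : N v = N a := hv.2.trans (mem_filter.mp ha).2.symm
  have hb : b ∈ P i ∧ H.Adj v b := by simpa using hb
  have hbN : b ∈ N v := mem_filter.mpr ⟨mem_biUnion.mpr ⟨i, mem_univ i, hb.1⟩, hb.2⟩
  rw [hN] at hbN
  exact (mem_filter.mp hbN).2

lemma isContained_of_forall_fitsClass {r s q : ℕ} {P : Fin r → Finset V} {A B : Finset V}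
    {i : Fin r} (hA : #A = s) (hB : #B = s) (hAB : H.IsCompleteBetween A B)
    (hfits : ∀ v, v ∈ A ∨ v ∈ B → FitsClass H P q v i) (hP : ∀ j, 2 * s * q + s ≤ #(P j))
    (hPP : Pairwise fun i j => H.IsCompleteBetween (P i) (P j)) :
    completeEquipartiteGraph (r + 1) s ⊑ H := by
  classical
  let Q : Fin r → Finset V := fun j => {x ∈ P j | ∀ u ∈ A ∪ B, H.Adj u x}
  have hQ : ∀ j ≠ i, s ≤ #(Q j) := fun j hj => by
    have hcommon : #(P j) ≤ #(A ∪ B) * q + #(Q j) :=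
      card_le_mul_add_card_common_neighbors fun u hu => (hfits u (mem_union.mp hu) j hj).le
    have hcard : #(A ∪ B) * q ≤ 2 * s * q :=
      Nat.mul_le_mul_right q ((card_union_le A B).trans (by omega))
    have := hP j
    omega
  have hAQ : ∀ j, H.IsCompleteBetween A (Q j) := fun j a ha x hx =>
    (mem_filter.mp hx).2 a (mem_union_left B ha)
  have hBQ : ∀ j, H.IsCompleteBetween B (Q j) := fun j b hb x hx =>
    (mem_filter.mp hx).2 b (mem_union_right A hb)
  have hQQ : Pairwise fun j k => H.IsCompleteBetween (Q j) (Q k) := fun j k hjk x hx y hy =>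
    hPP hjk (mem_of_mem_filter x hx) (mem_of_mem_filter y hy)
  refine isContained_succ_of_isCompleteBetween (A := A) (P := Function.update Q i B) hA.ge
    (fun j => ?_) (fun j => ?_) fun j k hjk => ?_
  · obtain rfl | hj := eq_or_ne j i
    · simp [hB]
    · simpa [hj] using hQ j hj
  · obtain rfl | hj := eq_or_ne j i
    · simpa using hAB
    · simpa [hj] using hAQ j
  · obtain rfl | hj := eq_or_ne j i
    · simpa [hjk.symm] using hBQ k
    obtain rfl | hk := eq_or_ne k i
    · simpa [hjk] using (hBQ j).symm
    · simpa [hj, hk] using hQQ hjk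

/- A vertex that is not counted on the right has more than `t - s` non-neighbours in some part `i`,
and if moreover it fits no class it has at least `q` non-neighbours in some other part `j`. -/
lemma mul_card_filter_not_fitsClass_add_le {r q s t : ℕ} {P : Fin r → Finset V} (S : Finset V)
    (ht : ∀ i, #(P i) = t) :
    q * #{v ∈ S | ∀ i, ¬ FitsClass H P q v i} + t * #S ≤
      ∑ i, ∑ u ∈ P i, #{v ∈ S | ¬ H.Adj v u} + s * #S +
        (t + q) * #{v ∈ S | ∀ i, s ≤ #{w ∈ P i | H.Adj v w}} := by
  have hmiss : ∀ v i, #{w ∈ P i | H.Adj v w} < s → t ≤ #{w ∈ P i | ¬ H.Adj v w} + s :=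
    fun v i hi => by
      have := card_filter_add_card_filter_not (s := P i) fun w => H.Adj v w
      have := ht i
      omega
  have hpoint : ∀ v ∈ S, (if ∀ i, ¬ FitsClass H P q v i then q else 0) + t ≤
      ∑ i, #{w ∈ P i | ¬ H.Adj v w} + s +
        if ∀ i, s ≤ #{w ∈ P i | H.Adj v w} then t + q else 0 := fun v _ => by
    split_ifs with hbad hfull hfull
    · omega
    · push Not at hfull
      obtain ⟨i, hi⟩ := hfull
      obtain ⟨j, hji, hj⟩ : ∃ j ≠ i, q ≤ #{w ∈ P j | ¬ H.Adj v w} := by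
        simpa [FitsClass] using hbad i
      have hsum := add_le_sum (f := fun i => #{w ∈ P i | ¬ H.Adj v w}) (fun _ _ => Nat.zero_le _)
        (mem_univ i) (mem_univ j) hji.symm
      have := hmiss v i hi
      omega
    · omega
    · push Not at hfull
      obtain ⟨i, hi⟩ := hfull
      have hsum := single_le_sum (f := fun i => #{w ∈ P i | ¬ H.Adj v w})
        (fun _ _ => Nat.zero_le _) (mem_univ i)
      have := hmiss v i hi
      omega
  have hswap : ∑ i, ∑ u ∈ P i, #{v ∈ S | ¬ H.Adj v u} =
      ∑ v ∈ S, ∑ i, #{w ∈ P i | ¬ H.Adj v w} := by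
    rw [sum_comm]
    exact sum_congr rfl fun i _ =>
      (sum_card_bipartiteAbove_eq_sum_card_bipartiteBelow fun v w => ¬ H.Adj v w).symm
  have hsum := sum_le_sum hpoint
  simp only [sum_add_distrib, ← sum_filter, sum_const, smul_eq_mul] at hsum
  rw [hswap]
  linarith

lemma mul_card_filter_not_fitsClass_le {p q s t : ℕ} {P : Fin p → Finset V} {S : Finset V} {ε : ℝ}
    (hp : p ≠ 0) (hfree : (completeEquipartiteGraph (p + 1) s).Free H)
    (hdeg : ∀ v ∈ S, (1 - 1 / p - ε) * #S ≤ #{w ∈ S | H.Adj v w}) (hPS : ∀ i, P i ⊆ S)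
    (ht : ∀ i, #(P i) = t) (hPP : Pairwise fun i j => H.IsCompleteBetween (P i) (P j)) :
    (q * #{v ∈ S | ∀ i, ¬ FitsClass H P q v i} : ℝ) ≤
      (p * t * ε + s) * #S + (t + q) * (2 ^ (p * t) * s) := by
  have hfull : (#{v ∈ S | ∀ i, s ≤ #{w ∈ P i | H.Adj v w}} : ℝ) ≤ 2 ^ (p * t) * s := by
    exact_mod_cast card_filter_forall_le_card_le_of_free S hfree (fun i => (ht i).le) hPP
  have hmiss : ∀ u ∈ S, (#{v ∈ S | ¬ H.Adj v u} : ℝ) ≤ (1 / p + ε) * #S := fun u hu => by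
    have hcard : (#{v ∈ S | H.Adj u v} + #{v ∈ S | ¬ H.Adj u v} : ℝ) = #S := by
      exact_mod_cast card_filter_add_card_filter_not _
    simp only [H.adj_comm _ u]
    linarith [hdeg u hu]
  have hsum : (∑ i, ∑ u ∈ P i, #{v ∈ S | ¬ H.Adj v u} : ℝ) ≤ (t + p * t * ε) * #S := calc
    _ ≤ ∑ i, ∑ _u ∈ P i, (1 / p + ε) * #S :=
      sum_le_sum fun i _ => sum_le_sum fun u hu => hmiss u (hPS i hu)
    _ = (t + p * t * ε) * #S := by simp [ht]; field_simp
  have hcount := (Nat.cast_le (α := ℝ)).mpr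
    (mul_card_filter_not_fitsClass_add_le (H := H) (q := q) (s := s) S ht)
  push_cast at hcount
  have : (t + q : ℝ) * #{v ∈ S | ∀ i, s ≤ #{w ∈ P i | H.Adj v w}} ≤
      (t + q) * (2 ^ (p * t) * s) := by gcongr
  linarith

lemma exists_parts_of_forall_mul_card_le {p : ℕ} {ε : ℝ} (hp : p ≠ 0) (hε : 2 * p ^ 2 * ε ≤ 1)
    (t : ℕ) :
    ∃ n₀ : ℕ, ∀ {V : Type*} {H : SimpleGraph V} [DecidableRel H.Adj] {S : Finset V},
      n₀ ≤ #S → (∀ v ∈ S, (1 - 1 / p - ε) * #S ≤ #{w ∈ S | H.Adj v w}) →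
      ∃ P : Fin p → Finset V, (∀ i, P i ⊆ S) ∧ (∀ i, #(P i) = t) ∧
        Pairwise fun i j => H.IsCompleteBetween (P i) (P j) := by
  obtain _ | _ | r := p
  · exact absurd rfl hp
  · refine ⟨t, fun {V H _ S} hS _ => ?_⟩
    obtain ⟨R, hRS, hR⟩ := exists_subset_card_eq hS
    exact ⟨fun _ => R, fun _ => hRS, fun _ => hR,
      fun i j hij => absurd (Fin.subsingleton_one.elim i j) hij⟩
  · have hgap : 1 - 1 / ((r + 1 : ℕ) : ℝ) + 1 / (2 * (r + 2) ^ 2) ≤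
        1 - 1 / ((r + 1 + 1 : ℕ) : ℝ) - ε := by
      push_cast at hε ⊢
      have hε' : ε ≤ 1 / (2 * (r + 2) ^ 2) := by
        rw [le_div_iff₀ (by positivity)]
        linarith
      have hinv : 2 * (1 / (2 * (r + 2 : ℝ) ^ 2)) ≤ 1 / (r + 1) - 1 / (r + 1 + 1) := calc
        _ = 1 / ((r + 2) * (r + 2) : ℝ) := by field_simp
        _ ≤ 1 / ((r + 1) * (r + 2)) := by gcongr; norm_num
        _ = 1 / (r + 1) - 1 / (r + 1 + 1) := by field_simp; ring
      linarith
    obtain ⟨n₀, hn₀⟩ := exists_isContained_induce_of_forall_mul_card_le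
      (ε := 1 / (2 * (r + 2) ^ 2)) (by positivity) (r + 1) t
    refine ⟨n₀, fun {V H _ S} hS hdeg => ?_⟩
    obtain ⟨P, hPS, hP⟩ := exists_parts_of_isContained_induce
      (hn₀ hS fun v hv => (mul_le_mul_of_nonneg_right hgap (Nat.cast_nonneg _)).trans (hdeg v hv))
    exact ⟨P, fun i => coe_subset.mp (hPS i), hP⟩

lemma free_monochromatic_of_forall_fitsClass {p s q : ℕ} {P : Fin p → Finset V} {c : V → Fin p}
    {W : Set V} (hfree : (completeEquipartiteGraph (p + 1) s).Free H)
    (hc : ∀ v ∈ W, FitsClass H P q v (c v)) (hP : ∀ i, 2 * s * q + s ≤ #(P i))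
    (hPP : Pairwise fun i j => H.IsCompleteBetween (P i) (P j)) :
    (completeEquipartiteGraph 2 s).Free ((monochromatic H c).induce W) := fun hK => by
  obtain rfl | hs := Nat.eq_zero_or_pos s
  · exact hfree .of_isEmpty
  obtain ⟨Q, hQW, hQ, hQQ⟩ := exists_parts_of_isContained_induce hK
  have hadj : ∀ a ∈ Q 0, ∀ b ∈ Q 1, H.Adj a b ∧ c a = c b := fun a ha b hb =>
    monochromatic_adj.mp (hQQ zero_ne_one ha hb)
  obtain ⟨a, ha⟩ := card_pos.mp (hs.trans_eq (hQ 0).symm)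
  obtain ⟨b, hb⟩ := card_pos.mp (hs.trans_eq (hQ 1).symm)
  refine hfree (isContained_of_forall_fitsClass (q := q) (i := c a) (hQ 0) (hQ 1)
    (fun u hu v hv => (hadj u hu v hv).1) (fun v hv => ?_) hP hPP)
  obtain hv | hv := hv
  · rw [(hadj a ha b hb).2, ← (hadj v hv b hb).2]
    exact hc v (hQW 0 hv)
  · rw [(hadj a ha v hv).2]
    exact hc v (hQW 1 hv)

lemma exists_coloring_free_monochromatic_of_free {p : ℕ} (hp : p ≠ 0) (s : ℕ) {γ : ℝ}
    (hγ : 0 < γ) :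
    ∃ ε > (0 : ℝ), ∃ n₀ : ℕ, ∀ {V : Type*} {H : SimpleGraph V} [DecidableRel H.Adj] {S : Finset V},
      (completeEquipartiteGraph (p + 1) s).Free H → n₀ ≤ #S →
      (∀ v ∈ S, (1 - 1 / p - ε) * #S ≤ #{w ∈ S | H.Adj v w}) →
      ∃ c : V → Fin p, ∃ W ⊆ S, (1 - γ) * #S ≤ #W ∧
        (completeEquipartiteGraph 2 s).Free ((monochromatic H c).induce (W : Set V)) := by
  obtain ⟨q, hq⟩ := exists_nat_ge ((s + 2) / γ)
  have hq₀ : (0 : ℝ) < q := lt_of_lt_of_le (by positivity) hq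
  rw [div_le_iff₀ hγ] at hq
  let t := 2 * s * q + s
  have hp' : (1 : ℝ) ≤ p := by exact_mod_cast Nat.one_le_iff_ne_zero.mpr hp
  have ht₀ : (0 : ℝ) ≤ t := t.cast_nonneg
  obtain ⟨ε, hε₀, hε, hptε⟩ : ∃ ε : ℝ, 0 < ε ∧ 2 * p ^ 2 * ε ≤ 1 ∧ p * t * ε ≤ 1 := by
    refine ⟨1 / (2 * p ^ 2 * (t + 1)), by positivity, ?_, ?_⟩ <;> field_simp <;> nlinarith
  obtain ⟨n₁, hn₁⟩ := exists_parts_of_forall_mul_card_le hp hε t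
  refine ⟨ε, hε₀, max n₁ ((t + q) * (2 ^ (p * t) * s)), fun {V H _ S} hfree hS hdeg => ?_⟩
  obtain ⟨P, hPS, ht, hPP⟩ := hn₁ (le_of_max_le_left hS) hdeg
  have hbad : (#{v ∈ S | ∀ i, ¬ FitsClass H P q v i} : ℝ) ≤ γ * #S := by
    have hcount := mul_card_filter_not_fitsClass_le (q := q) hp hfree hdeg hPS ht hPP
    have hn₀ : (t + q : ℝ) * (2 ^ (p * t) * s) ≤ #S := by exact_mod_cast le_of_max_le_right hS
    refine le_of_mul_le_mul_left ?_ hq₀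
    calc
      _ ≤ (p * t * ε + s) * #S + (t + q) * (2 ^ (p * t) * s) := hcount
      _ ≤ (1 + s) * #S + #S := by gcongr
      _ = (s + 2) * #S := by ring
      _ ≤ q * γ * #S := by gcongr
      _ = q * (γ * #S) := mul_assoc _ _ _
  have : Nonempty (Fin p) := Fin.pos_iff_nonempty.mp (Nat.pos_of_ne_zero hp)
  refine ⟨fun v => Classical.epsilon (FitsClass H P q v), {v ∈ S | ¬ ∀ i, ¬ FitsClass H P q v i},
    filter_subset _ _, ?_, free_monochromatic_of_forall_fitsClass hfree (fun v hv => ?_)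
      (fun i => (ht i).ge) hPP⟩
  · have hcard : (#{v ∈ S | ∀ i, ¬ FitsClass H P q v i} +
        #{v ∈ S | ¬ ∀ i, ¬ FitsClass H P q v i} : ℝ) = #S := by
      exact_mod_cast card_filter_add_card_filter_not _
    linarith
  · exact Classical.epsilon_spec (by simpa using (mem_filter.mp hv).2)

lemma exists_large_subset_forall_mul_card_le_of_free (p s : ℕ) {ε κ : ℝ} (hε : 0 < ε)
    (hκ : 0 < κ) :
    ∃ δ > (0 : ℝ), ∃ n₀ : ℕ, ∀ {V : Type*} [Fintype V] {H : SimpleGraph V} [DecidableRel H.Adj],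
      (completeEquipartiteGraph (p + 1) s).Free H → n₀ ≤ Fintype.card V →
      (1 - 1 / p - δ) * (Fintype.card V : ℝ) ^ 2 ≤ #(H.interedges univ univ) →
      ∃ S : Finset V, (1 - κ) * (Fintype.card V : ℝ) ≤ #S ∧
        ∀ v ∈ S, (1 - 1 / p - ε) * #S ≤ #{w ∈ S | H.Adj v w} := by
  have hη : 0 < ε * κ / 3 := by positivity
  obtain ⟨n₁, hn₁⟩ := exists_card_interedges_le_of_free hη p s
  obtain ⟨n₂, hn₂⟩ := exists_nat_ge (1 / (ε * κ / 3))
  refine ⟨ε * κ / 3, hη, max n₁ n₂, fun {V _ H _} hfree hn hE => ?_⟩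
  obtain ⟨S, -, hdeg, hpot⟩ := exists_subset_forall_mul_card_le H univ (1 - 1 / (p : ℝ) - ε)
  refine ⟨S, ?_, hdeg⟩
  have hS := hn₁ (free_induce hfree S) (le_of_max_le_left hn) (card_le_univ S)
  have hn₂' : 1 / (ε * κ / 3) ≤ (Fintype.card V : ℝ) :=
    hn₂.trans (by exact_mod_cast le_of_max_le_right hn)
  rw [card_univ] at hpot
  have hn₀ : (0 : ℝ) < Fintype.card V := lt_of_lt_of_le (by positivity) hn₂'
  have hm : (0 : ℝ) ≤ #S := Nat.cast_nonneg _
  have hp : (0 : ℝ) ≤ 1 / p := by positivity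
  generalize 1 / (p : ℝ) = β at *
  generalize (Fintype.card V : ℝ) = n at *
  generalize (#S : ℝ) = m at *
  by_contra! hlt
  have hlinear : n ≤ ε * κ / 3 * n ^ 2 := by
    rw [div_le_iff₀ hη] at hn₂'
    nlinarith
  have hmn : 0 ≤ n - m := by nlinarith
  have hsq : κ * n ^ 2 < n ^ 2 - m ^ 2 := calc
    κ * n ^ 2 = κ * n * n := by ring
    _ < (n - m) * n := by gcongr; linarith
    _ ≤ (n - m) * (n + m) := by gcongr; linarith
    _ = n ^ 2 - m ^ 2 := by ring
  have hdiff : ε * (n ^ 2 - m ^ 2) ≤ 2 * (ε * κ / 3) * n ^ 2 + n := by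
    have : 0 ≤ (β + ε) * (n - m) := by positivity
    linarith
  linarith [mul_lt_mul_of_pos_left hsq hε]

lemma card_interedges_univ_le_add [Fintype V] [DecidableEq V] (W : Finset V) :
    #(H.interedges univ univ) ≤ #(H.interedges W W) + 2 * (Fintype.card V * #Wᶜ) := by
  have hcover : H.interedges univ univ ⊆ H.interedges W W ∪ (univ ×ˢ Wᶜ ∪ Wᶜ ×ˢ univ) :=
    fun e he => by
      simp only [mem_union, interedges_def, mem_filter, mem_product, mem_univ, mem_compl] at he ⊢
      tauto
  calc
    _ ≤ #(H.interedges W W) + (#(univ ×ˢ Wᶜ) + #(Wᶜ ×ˢ univ)) :=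
      (card_le_card hcover).trans ((card_union_le _ _).trans (by gcongr; exact card_union_le _ _))
    _ = _ := by simp only [card_product, card_univ]; ring

theorem exists_coloring_card_interedges_monochromatic_le {p : ℕ} (hp : p ≠ 0) (s : ℕ) {γ : ℝ}
    (hγ : 0 < γ) :
    ∃ δ > (0 : ℝ), ∃ n₀ : ℕ, ∀ {V : Type*} [Fintype V] {H : SimpleGraph V} [DecidableRel H.Adj],
      (completeEquipartiteGraph (p + 1) s).Free H → n₀ ≤ Fintype.card V →
      (1 - 1 / p - δ) * (Fintype.card V : ℝ) ^ 2 ≤ #(H.interedges univ univ) →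
      ∃ c : V → Fin p,
        #((monochromatic H c).interedges univ univ) ≤ γ * (Fintype.card V : ℝ) ^ 2 := by
  obtain ⟨μ, hμ, hμγ, hμ1⟩ : ∃ μ : ℝ, 0 < μ ∧ 5 * μ ≤ γ ∧ 2 * μ ≤ 1 :=
    ⟨min (γ / 5) (1 / 2), by positivity, by linarith [min_le_left (γ / 5) (1 / 2)],
      by linarith [min_le_right (γ / 5) (1 / 2)]⟩
  obtain ⟨ε, hε, n₁, hn₁⟩ := exists_coloring_free_monochromatic_of_free hp s hμ
  obtain ⟨δ, hδ, n₂, hn₂⟩ := exists_large_subset_forall_mul_card_le_of_free p s hε hμ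
  obtain ⟨n₃, hn₃⟩ := exists_card_interedges_le_of_free hμ 1 s
  refine ⟨δ, hδ, max (2 * n₁) (max n₂ n₃), fun {V _ H _} hfree hn hE => ?_⟩
  classical
  simp only [max_le_iff] at hn
  obtain ⟨S, hS, hdeg⟩ := hn₂ hfree hn.2.1 hE
  have hn₁S : n₁ ≤ #S := by
    have : (2 * n₁ : ℝ) ≤ Fintype.card V := by exact_mod_cast hn.1
    rify
    nlinarith
  obtain ⟨c, W, -, hW, hcW⟩ := hn₁ hfree hn₁S hdeg
  have hinner := hn₃ hcW hn.2.2 (card_le_univ W)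
  have hcover := (Nat.cast_le (α := ℝ)).mpr (card_interedges_univ_le_add (H := monochromatic H c) W)
  refine ⟨c, ?_⟩
  push_cast [card_compl, Nat.cast_sub (card_le_univ W)] at hcover
  simp only [Nat.cast_one, div_one, sub_self, zero_mul, zero_add] at hinner
  calc
    _ ≤ #((monochromatic H c).interedges W W) +
        2 * (Fintype.card V * (Fintype.card V - #W : ℝ)) := hcover
    _ ≤ μ * Fintype.card V ^ 2 + 2 * (Fintype.card V * (2 * μ * Fintype.card V)) := by
      gcongr
      nlinarith
    _ = 5 * μ * (Fintype.card V) ^ 2 := by ring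
    _ ≤ γ * (Fintype.card V) ^ 2 := by gcongr

lemma exists_coloring_forall_card_filter_adj_le {κ : Type*} [Finite κ] [DecidableEq κ] [Fintype V]
    (c₀ : V → κ) :
    ∃ c : V → κ, #((monochromatic H c).interedges univ univ) ≤
        #((monochromatic H c₀).interedges univ univ) ∧
      ∀ v j, #{w | c w = c v ∧ H.Adj v w} ≤ #{w | c w = j ∧ H.Adj v w} := by
  classical
  have : Nonempty (V → κ) := ⟨c₀⟩
  obtain ⟨c, hc⟩ := Finite.exists_min fun c : V → κ => #((monochromatic H c).interedges univ univ)
  refine ⟨c, hc c₀, fun v j => ?_⟩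
  have hle := hc (Function.update c v j)
  have herase :
      (monochromatic H (Function.update c v j)).interedges (univ.erase v) (univ.erase v) =
      (monochromatic H c).interedges (univ.erase v) (univ.erase v) := by
    ext e
    simp +contextual [interedges_def, monochromatic_adj]
  have hcard : ∀ (d : V → κ), #{w | (monochromatic H d).Adj v w} = #{w | d w = d v ∧ H.Adj v w} :=
    fun d => by simp only [monochromatic_adj, and_comm, eq_comm]
  rw [card_interedges_eq_erase_add _ (mem_univ v), card_interedges_eq_erase_add _ (mem_univ v),
    herase, hcard, hcard] at hle
  have hupdate : ∀ w, Function.update c v j w = Function.update c v j v ∧ H.Adj v w ↔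
      c w = j ∧ H.Adj v w := fun w => by
    obtain rfl | hw := eq_or_ne w v <;> simp [*]
  simp only [hupdate] at hle
  omega

lemma sum_sum_eq_two_mul_sum_sum_lt_add {κ R : Type*} [Fintype κ] [LinearOrder κ]
    [CommSemiring R] {f : κ → κ → R} (hf : ∀ i j, f i j = f j i) :
    ∑ i, ∑ j, f i j = 2 * ∑ i, ∑ j with i < j, f i j + ∑ i, f i i := by
  have hsplit : ∀ i j, f i j =
      (if i < j then f i j else 0) + (if j < i then f j i else 0) + if j = i then f i i else 0 :=
    fun i j => by
      obtain h | rfl | h := lt_trichotomy i j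
      · simp [h, h.not_gt, h.ne']
      · simp
      · simp [h, h.not_gt, h.ne, hf i j]
  have hswap : ∑ i, ∑ j, (if j < i then f j i else 0) = ∑ i, ∑ j, if i < j then f i j else 0 :=
    sum_comm
  calc
    _ = _ := sum_congr rfl fun i _ => sum_congr rfl fun j _ => hsplit i j
    _ = _ := by
      simp only [sum_add_distrib, hswap, sum_filter, sum_ite_eq', mem_univ, if_true]
      ring

section Classes

variable [Fintype V] {κ : Type*} [Fintype κ] (c : V → κ)

lemma sum_card_interedges_filter_eq [DecidableEq κ] :
    ∑ i, ∑ j, #(H.interedges {v | c v = i} {v | c v = j}) = #(H.interedges univ univ) := by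
  rw [card_eq_sum_card_fiberwise (f := Prod.map c c) (t := univ) (by simp), Fintype.sum_prod_type]
  refine sum_congr rfl fun i _ => sum_congr rfl fun j _ => congrArg card ?_
  ext e
  simp [interedges_def, Prod.ext_iff, and_comm]

lemma sum_card_interedges_filter_self_eq [DecidableEq κ] :
    ∑ i, #(H.interedges {v | c v = i} {v | c v = i}) =
      #((monochromatic H c).interedges univ univ) := by
  rw [card_eq_sum_card_fiberwise (f := fun e => c e.1) (t := univ) (by simp)]
  refine sum_congr rfl fun i _ => congrArg card ?_
  ext e
  simp only [interedges_def, mem_filter, mem_product, mem_univ, monochromatic_adj, true_and]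
  grind

lemma two_mul_sum_missing_add_sum_sq_eq [LinearOrder κ] [Nonempty κ] :
    2 * ∑ i, ∑ j with i < j, ((#{v | c v = i} * #{v | c v = j} : ℝ) -
          #(H.interedges {v | c v = i} {v | c v = j})) +
        ∑ i, ((#{v | c v = i} : ℝ) - Fintype.card V / Fintype.card κ) ^ 2 =
      (1 - 1 / Fintype.card κ) * (Fintype.card V : ℝ) ^ 2 - #(H.interedges univ univ) +
        #((monochromatic H c).interedges univ univ) := by
  have hsum : ∑ i, (#{v | c v = i} : ℝ) = Fintype.card V := by
    exact_mod_cast (card_eq_sum_card_fiberwise (f := c) (t := univ) (by simp)).symm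
  have hprod : ∑ i, ∑ j, (#{v | c v = i} * #{v | c v = j} : ℝ) = Fintype.card V ^ 2 := by
    rw [← sum_mul_sum, hsum, sq]
  have hsq : ∑ i, ((#{v | c v = i} : ℝ) - Fintype.card V / Fintype.card κ) ^ 2 =
      ∑ i, (#{v | c v = i} * #{v | c v = i} : ℝ) - Fintype.card V ^ 2 / Fintype.card κ := by
    simp only [sub_sq, sum_add_distrib, sum_sub_distrib, ← sum_mul, ← mul_sum, hsum, sum_const,
      card_univ, nsmul_eq_mul, sq (Nat.cast _ : ℝ)]
    field_simp
    ring
  have hE := (Nat.cast_inj (R := ℝ)).mpr (sum_card_interedges_filter_eq (H := H) c)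
  have hM := (Nat.cast_inj (R := ℝ)).mpr (sum_card_interedges_filter_self_eq (H := H) c)
  have : Std.Symm H.Adj := ⟨fun _ _ h => h.symm⟩
  have hsymm := sum_sum_eq_two_mul_sum_sum_lt_add (f := fun i j =>
    (#{v | c v = i} * #{v | c v = j} : ℝ) - #(H.interedges {v | c v = i} {v | c v = j}))
    fun i j => by rw [mul_comm, interedges, interedges, Rel.card_interedges_comm]
  simp only [sum_sub_distrib] at hsymm hsq ⊢
  push_cast at hE hM
  rw [hprod, hE, hM] at hsymm
  rw [hsq]
  linear_combination -hsymm

lemma two_mul_sum_missing_le [LinearOrder κ] [Nonempty κ] :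
    2 * ∑ i, ∑ j with i < j, ((#{v | c v = i} * #{v | c v = j} : ℝ) -
        #(H.interedges {v | c v = i} {v | c v = j})) ≤
      (1 - 1 / Fintype.card κ) * (Fintype.card V : ℝ) ^ 2 - #(H.interedges univ univ) +
        #((monochromatic H c).interedges univ univ) := by
  rw [← two_mul_sum_missing_add_sum_sq_eq, le_add_iff_nonneg_right]
  exact sum_nonneg fun i _ => sq_nonneg _

lemma sq_card_filter_sub_le [LinearOrder κ] [Nonempty κ] (i : κ) :
    ((#{v | c v = i} : ℝ) - Fintype.card V / Fintype.card κ) ^ 2 ≤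
      (1 - 1 / Fintype.card κ) * (Fintype.card V : ℝ) ^ 2 - #(H.interedges univ univ) +
        #((monochromatic H c).interedges univ univ) := by
  rw [← two_mul_sum_missing_add_sum_sq_eq]
  refine le_add_of_nonneg_of_le (mul_nonneg zero_le_two ?_)
    (single_le_sum (f := fun i => ((#{v | c v = i} : ℝ) - Fintype.card V / Fintype.card κ) ^ 2)
      (fun _ _ => sq_nonneg _) (mem_univ i))
  exact sum_nonneg fun i _ => sum_nonneg fun j _ => sub_nonneg.mpr
    (by exact_mod_cast H.card_interedges_le_mul _ _)

end Classes

theorem exists_balanced_coloring_of_free {p : ℕ} (hp : p ≠ 0) (s : ℕ) {ξ : ℝ} (hξ : 0 < ξ) :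
    ∃ δ > (0 : ℝ), ∃ n₀ > 0, ∀ {V : Type*} [Fintype V] {H : SimpleGraph V} [DecidableRel H.Adj],
      (completeEquipartiteGraph (p + 1) s).Free H → n₀ ≤ Fintype.card V →
      (1 - 1 / p - δ) * (Fintype.card V : ℝ) ^ 2 ≤ #(H.interedges univ univ) →
      ∃ c : V → Fin p,
        ∑ i, ∑ j with i < j, ((#{v | c v = i} * #{v | c v = j} : ℝ) -
          #(H.interedges {v | c v = i} {v | c v = j})) < ξ * (Fintype.card V : ℝ) ^ 2 ∧
        #((monochromatic H c).interedges univ univ) < ξ * (Fintype.card V : ℝ) ^ 2 ∧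
        (∀ v j, #{w | c w = c v ∧ H.Adj v w} ≤ #{w | c w = j ∧ H.Adj v w}) ∧
        ∀ i, |(#{v | c v = i} : ℝ) - Fintype.card V / p| < ξ * Fintype.card V := by
  obtain ⟨γ, hγ, hγξ, hγξ'⟩ : ∃ γ > 0, 2 * γ < ξ ∧ 2 * γ < ξ ^ 2 :=
    ⟨min ξ (ξ ^ 2) / 3, by positivity, by linarith [min_le_left ξ (ξ ^ 2)],
      by linarith [min_le_right ξ (ξ ^ 2), pow_pos hξ 2]⟩
  obtain ⟨δ, hδ, n₀, hn₀⟩ := exists_coloring_card_interedges_monochromatic_le hp s hγ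
  refine ⟨min δ γ, lt_min hδ hγ, max n₀ 1, by positivity, fun {V _ H _} hfree hn hE => ?_⟩
  have hV : (0 : ℝ) < Fintype.card V := by exact_mod_cast le_of_max_le_right hn
  obtain ⟨c₀, hc₀⟩ := hn₀ hfree (le_of_max_le_left hn)
    (le_trans (by gcongr; exact min_le_left δ γ) hE)
  obtain ⟨c, hc, hmax⟩ := exists_coloring_forall_card_filter_adj_le (H := H) c₀
  have hinner : #((monochromatic H c).interedges univ univ) ≤ γ * (Fintype.card V : ℝ) ^ 2 :=
    le_trans (by exact_mod_cast hc) hc₀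
  have hE' : (1 - 1 / p - γ) * (Fintype.card V : ℝ) ^ 2 ≤ #(H.interedges univ univ) :=
    le_trans (by gcongr; exact min_le_right δ γ) hE
  have : NeZero p := ⟨hp⟩
  have hmissing := two_mul_sum_missing_le (H := H) c
  have hsq := sq_card_filter_sub_le (H := H) c
  rw [Fintype.card_fin] at hmissing hsq
  have hγV : 2 * γ * (Fintype.card V : ℝ) ^ 2 < ξ * (Fintype.card V : ℝ) ^ 2 := by gcongr
  refine ⟨c, by linarith, by linarith, hmax, fun i => abs_lt_of_sq_lt_sq ?_ (by positivity)⟩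
  calc ((#{v | c v = i} : ℝ) - Fintype.card V / p) ^ 2
      ≤ 2 * γ * Fintype.card V ^ 2 := by linarith [hsq i]
    _ < ξ ^ 2 * Fintype.card V ^ 2 := by gcongr
    _ = (ξ * Fintype.card V) ^ 2 := by ring

lemma card_interedges_univ_univ_eq [Fintype V] :
    #(H.interedges univ univ) = 2 * H.edgeSet.ncard := by
  classical
  rw [card_interedges_eq_sum, Set.ncard_eq_toFinset_card', ← edgeFinset,
    ← sum_degrees_eq_twice_card_edges]
  exact sum_congr rfl fun v _ => by rw [← card_neighborFinset_eq_degree, neighborFinset_eq_filter]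

lemma le_card_interedges_of_lt_ncard_edgeSet [Fintype V] {p : ℕ} (hp : p ≠ 0) {δ : ℝ}
    (hE : ((p : ℝ) - 1) * (Fintype.card V : ℝ) ^ 2 / (2 * p) - δ / 2 * (Fintype.card V : ℝ) ^ 2 <
      H.edgeSet.ncard) :
    (1 - 1 / p - δ) * (Fintype.card V : ℝ) ^ 2 ≤ #(H.interedges univ univ) := by
  rw [card_interedges_univ_univ_eq, Nat.cast_mul, Nat.cast_two]
  calc
    _ = 2 * (((p : ℝ) - 1) * (Fintype.card V : ℝ) ^ 2 / (2 * p) -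
        δ / 2 * (Fintype.card V : ℝ) ^ 2) := by field_simp
    _ ≤ _ := by gcongr

section CrossEdges

variable {N : ℕ} {H : SimpleGraph (Fin N)} [DecidableRel H.Adj]

lemma crossEdges_eq_card_image (A B : Finset (Fin N)) :
    crossEdges H A B = #((H.interedges A B).image fun e => s(e.1, e.2)) := by
  rw [crossEdges, ← Set.ncard_coe_finset]
  congr 1
  ext e
  simp only [interedges_def, coe_image, Set.mem_image, mem_coe, mem_filter, mem_product,
    Prod.exists, Set.mem_ofPred_eq]
  constructor
  · rintro ⟨he, u, hu, v, hv, rfl⟩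
    exact ⟨u, v, ⟨⟨hu, hv⟩, he⟩, rfl⟩
  · rintro ⟨u, v, ⟨⟨hu, hv⟩, he⟩, rfl⟩
    exact ⟨he, u, hu, v, hv, rfl⟩

lemma crossEdges_le_card_interedges (A B : Finset (Fin N)) :
    crossEdges H A B ≤ #(H.interedges A B) :=
  (crossEdges_eq_card_image A B).trans_le card_image_le

lemma crossEdges_eq_card_interedges {A B : Finset (Fin N)} (hAB : Disjoint A B) :
    crossEdges H A B = #(H.interedges A B) := by
  refine (crossEdges_eq_card_image A B).trans (card_image_of_injOn ?_)
  rintro ⟨a, b⟩ hab ⟨x, y⟩ hxy heq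
  simp only [interedges_def, mem_coe, mem_filter, mem_product] at hab hxy
  obtain h | h := Sym2.mk_eq_mk_iff.mp heq
  · exact h
  · obtain ⟨rfl, -⟩ := Prod.mk.inj h
    exact absurd hxy.1.2 (disjoint_left.mp hAB hab.1.1)

variable {p : ℕ} (c : Fin N → Fin p)

lemma cast_sum_missing_eq :
    ((∑ i : Fin p, ∑ j : Fin p, if i < j then
        ({v | c v = i}.ncard * {v | c v = j}.ncard
          - crossEdges H {v | c v = i} {v | c v = j}) else 0 : ℕ) : ℝ) =
      ∑ i, ∑ j with i < j, ((#{v | c v = i} * #{v | c v = j} : ℝ) -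
        #(H.interedges {v | c v = i} {v | c v = j})) := by
  simp only [← sum_filter, Nat.cast_sum]
  refine sum_congr rfl fun i _ => sum_congr rfl fun j hij => ?_
  have hcross := crossEdges_eq_card_interedges (H := H) (A := {v | c v = i}) (B := {v | c v = j})
    (disjoint_filter.mpr fun v _ hi hj => (mem_filter.mp hij).2.ne (hi.symm.trans hj))
  simp only [coe_filter_univ] at hcross
  rw [hcross, Set.ncard_eq_toFinset_card', Set.ncard_eq_toFinset_card', Set.toFinset_ofPred,
    Set.toFinset_ofPred, Nat.cast_sub (H.card_interedges_le_mul _ _), Nat.cast_mul]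

lemma sum_crossEdges_self_le :
    ∑ i : Fin p, crossEdges H {v | c v = i} {v | c v = i} ≤
      #((monochromatic H c).interedges univ univ) := by
  rw [← sum_card_interedges_filter_self_eq]
  exact sum_le_sum fun i _ => by
    simpa using crossEdges_le_card_interedges (H := H) {v | c v = i} {v | c v = i}

end CrossEdges

end

theorem statement_12 (p : ℕ) {U : Type*} [Fintype U] (G : SimpleGraph U)
    (hchi : G.chromaticNumber = (p + 1 : ℕ)) :
    ∀ ξ : ℝ, 0 < ξ → ∃ δ : ℝ, 0 < δ ∧ ∃ n₀ : ℕ, 0 < n₀ ∧ ∀ N : ℕ, n₀ < N →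
      ∀ H : SimpleGraph (Fin N),
        ((p : ℝ) - 1) * (N : ℝ) ^ 2 / (2 * p) - δ * (N : ℝ) ^ 2 < (H.edgeSet.ncard : ℝ) →
        ¬ containsCopy H G →
        ∃ c : Fin N → Fin p,
          -- (1) almost all cross pairs are edges
          ((∑ i : Fin p, ∑ j : Fin p, if i < j then
              ({v | c v = i}.ncard * {v | c v = j}.ncard
                - crossEdges H {v | c v = i} {v | c v = j}) else 0 : ℕ) : ℝ) < ξ * (N : ℝ) ^ 2 ∧
          -- (2) few edges inside the classes
          ((∑ i : Fin p, crossEdges H {v | c v = i} {v | c v = i} : ℕ) : ℝ) < ξ * (N : ℝ) ^ 2 ∧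
          -- (3) each vertex has no more neighbors in its own class than in any other class
          (∀ i j : Fin p, ∀ v : Fin N, c v = i →
            {u | c u = i ∧ H.Adj v u}.ncard ≤ {u | c u = j ∧ H.Adj v u}.ncard) ∧
          -- (4) the classes are balanced
          (∀ i : Fin p, (N : ℝ) / p - ξ * N < ({v | c v = i}.ncard : ℝ) ∧
            ({v | c v = i}.ncard : ℝ) < (N : ℝ) / p + ξ * N) := by
  intro ξ hξ
  have hGK := isContained_completeEquipartiteGraph_card_of_colorable
    (chromaticNumber_le_iff_colorable.mp hchi.le)
  obtain rfl | hp := eq_or_ne p 0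
  · refine ⟨1, one_pos, Fintype.card U + 1, Nat.succ_pos _, fun N hN H _ hGH => absurd ?_ hGH⟩
    exact (containsCopy_iff_isContained_s12 H).mpr
      (hGK.trans (completeEquipartiteGraph_one_isContained (by simp; omega)))
  obtain ⟨δ, hδ, n₀, hn₀, h⟩ := exists_balanced_coloring_of_free hp (Fintype.card U) hξ
  refine ⟨δ / 2, half_pos hδ, n₀, hn₀, fun N hN H hE hGH => ?_⟩
  classical
  obtain ⟨c, hmissing, hinner, hmax, hbal⟩ :=
    h (fun hKH => hGH ((containsCopy_iff_isContained_s12 H).mpr (hGK.trans hKH)))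
      (by simpa using hN.le) (le_card_interedges_of_lt_ncard_edgeSet hp (by simpa using hE))
  rw [Fintype.card_fin] at hmissing hinner hbal
  refine ⟨c, (cast_sum_missing_eq c).trans_lt hmissing,
    lt_of_le_of_lt (by exact_mod_cast sum_crossEdges_self_le c) hinner, ?_, fun i => ?_⟩
  · rintro _ j v rfl
    simpa [Set.ncard_eq_toFinset_card'] using hmax v j
  · have := abs_lt.mp (hbal i)
    constructor <;> simp [Set.ncard_eq_toFinset_card'] <;> linarith
end

section
/- Let G be an edge-critical graph with χ(G) = k + 1, and let m be the maximum size of a color class taken over all proper (k+1)-colorings of G. Then G is isomorphic to a subgraph of the graph K⁺ obtained from the complete k-partite graph with one part of size m + 1 and k − 1 parts of size m by adding one extra edge inside the part of size m + 1. -/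
open SimpleGraph

/-- The maximum size of a color class over all proper `k`-colorings of `G`. -/
noncomputable def maxClassSize {V : Type*} (G : SimpleGraph V) (k : ℕ) : ℕ :=
  sSup { m : ℕ | ∃ C : G.Coloring (Fin k), ∃ i : Fin k, m = {v | C v = i}.ncard }

/-- `KplusGraph k m` : the complete `k`-partite graph with one part of size `m + 1` and
`k - 1` parts of size `m`, together with one extra edge (between the vertices `0` and `1`)
inside the part of size `m + 1`. -/
def KplusGraph (k m : ℕ) : SimpleGraph (Fin (m + 1) ⊕ (Fin (k - 1) × Fin m)) :=
  SimpleGraph.fromRel (fun a b =>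
    match a, b with
    | Sum.inl x, Sum.inl y => x = 0 ∧ y = 1
    | Sum.inl _, Sum.inr _ => True
    | Sum.inr _, Sum.inl _ => True
    | Sum.inr p, Sum.inr q => p.1 ≠ q.1)

/-!
Deleting the critical edge `uv` leaves a `k`-coloring of `G - uv`. Giving `u` a color of its own
turns it into a `(k + 1)`-coloring of `G`, so each color class has at most `m` vertices besides `u`.
The class of `u` therefore fits into the large part of `K⁺`, every other class fits into a part of
size `m`, and `uv`, if it is the one monochromatic edge, can be moved onto the extra edge of `K⁺` by
permuting the large part.
-/

theorem exists_injective_forall_apply_eq_of_fiber_embedding {α β ι : Type*} {p : α → ι} {q : β → ι}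
    (h : ∀ i, Nonempty ({a // p a = i} ↪ {b // q b = i})) :
    ∃ f : α → β, Function.Injective f ∧ ∀ a, q (f a) = p a := by
  let g i := (h i).some
  let f : α ↪ β := (Equiv.sigmaFiberEquiv p).symm.toEmbedding.trans
    ((Function.Embedding.sigmaMap (.refl ι) g).trans (Equiv.sigmaFiberEquiv q).toEmbedding)
  exact ⟨f, f.injective, fun a ↦ (g (p a) ⟨a, rfl⟩).2⟩

theorem ncard_colorClass_le_maxClassSize {V α : Type*} [Finite V] [Finite α] {G : SimpleGraph V}
    (C : G.Coloring α) (i : α) : (C.colorClass i).ncard ≤ maxClassSize G (Nat.card α) := by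
  let e := Finite.equivFin α
  refine le_csSup ⟨Nat.card V, ?_⟩ ⟨G.recolorOfEquiv e C, e i, ?_⟩
  · rintro _ ⟨D, j, rfl⟩
    exact Set.ncard_le_card _
  · simp [Coloring.colorClass]

theorem deleteIncidenceSet_le_deleteEdges {V : Type*} {G : SimpleGraph V} {u v : V} :
    G.deleteIncidenceSet u ≤ G.deleteEdges {s(u, v)} := by
  intro a b hab
  obtain ⟨hadj, ha, hb⟩ := deleteIncidenceSet_adj.1 hab
  exact deleteEdges_adj.2 ⟨hadj, by simp [ha, hb]⟩

section IsolatingColoring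

variable {V α : Type*} {G : SimpleGraph V} {u : V}

/-- The coloring of `G` obtained from a coloring of `G` without the edges at `u` by giving `u` the
new color `none`. -/
def isolatingColoring [DecidableEq V] (C : (G.deleteIncidenceSet u).Coloring α) :
    G.Coloring (Option α) :=
  Coloring.mk (fun w ↦ if w = u then none else some (C w)) fun {a b} hab ↦ by
    by_cases ha : a = u <;> by_cases hb : b = u
    · exact absurd (ha.trans hb.symm) hab.ne
    · simp [ha, hb]
    · simp [ha, hb]
    · simpa [ha, hb] using C.valid (deleteIncidenceSet_adj.2 ⟨hab, ha, hb⟩)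

theorem isolatingColoring_apply [DecidableEq V] (C : (G.deleteIncidenceSet u).Coloring α) (w : V) :
    isolatingColoring C w = if w = u then none else some (C w) :=
  rfl

theorem colorClass_isolatingColoring_some [DecidableEq V]
    (C : (G.deleteIncidenceSet u).Coloring α) (i : α) :
    (isolatingColoring C).colorClass (some i) = C.colorClass i \ {u} := by
  ext w
  by_cases hw : w = u <;> simp [Coloring.colorClass, isolatingColoring_apply, hw]

theorem ncard_colorClass_sdiff_singleton_le_maxClassSize [Finite V] [Finite α]
    (C : (G.deleteIncidenceSet u).Coloring α) (i : α) :
    (C.colorClass i \ {u}).ncard ≤ maxClassSize G (Nat.card α + 1) := by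
  classical
  rw [← colorClass_isolatingColoring_some, ← Finite.card_option]
  exact ncard_colorClass_le_maxClassSize (isolatingColoring C) (some i)

end IsolatingColoring

namespace KplusGraph

variable {k m : ℕ}

/-- The part of `KplusGraph k m` containing a vertex: `none` is the part of size `m + 1` and
`some i` are the parts of size `m`. -/
def part : Fin (m + 1) ⊕ (Fin (k - 1) × Fin m) → Option (Fin (k - 1)) :=
  Sum.elim (fun _ ↦ none) (fun p ↦ some p.1)

theorem adj_of_part_ne {x y : Fin (m + 1) ⊕ (Fin (k - 1) × Fin m)} (h : part x ≠ part y) :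
    (KplusGraph k m).Adj x y := by
  rw [KplusGraph, fromRel_adj]
  refine ⟨fun hxy ↦ h (congrArg part hxy), ?_⟩
  rcases x with x | x <;> rcases y with y | y <;> simp_all [part]

theorem adj_inl_zero_inl_one [NeZero m] : (KplusGraph k m).Adj (.inl 0) (.inl 1) := by
  simp [KplusGraph]

theorem part_eq_none_iff {x : Fin (m + 1) ⊕ (Fin (k - 1) × Fin m)} :
    part x = none ↔ ∃ a, x = .inl a := by
  rcases x with a | p <;> simp [part]

theorem part_map_id (σ : Fin (m + 1) → Fin (m + 1)) (x : Fin (m + 1) ⊕ (Fin (k - 1) × Fin m)) :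
    part (Sum.map σ id x) = part x := by
  rcases x with a | p <;> rfl

variable {V : Type*} [Finite V] {C : V → Option (Fin (k - 1))}

theorem exists_injective_forall_part_eq (hnone : {w | C w = none}.ncard ≤ m + 1)
    (hsome : ∀ i, {w | C w = some i}.ncard ≤ m) :
    ∃ f : V → Fin (m + 1) ⊕ (Fin (k - 1) × Fin m),
      Function.Injective f ∧ ∀ w, part (f w) = C w := by
  refine exists_injective_forall_apply_eq_of_fiber_embedding ?_
  rintro (_ | i)
  · let e : {w // C w = none} ↪ Fin (m + 1) :=
      (Finite.equivFin _).toEmbedding.trans (Fin.castLEEmb hnone)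
    exact ⟨fun w ↦ ⟨.inl (e w), rfl⟩, fun a b h ↦
      e.injective (Sum.inl_injective (congrArg Subtype.val h))⟩
  · let e : {w // C w = some i} ↪ Fin m :=
      (Finite.equivFin _).toEmbedding.trans (Fin.castLEEmb (hsome i))
    exact ⟨fun w ↦ ⟨.inr (i, e w), rfl⟩, fun a b h ↦
      e.injective (congrArg Prod.snd (Sum.inr_injective (congrArg Subtype.val h)))⟩

theorem exists_injective_forall_part_eq_and_adj (hnone : {w | C w = none}.ncard ≤ m + 1)
    (hsome : ∀ i, {w | C w = some i}.ncard ≤ m) {u v : V} (huv : u ≠ v) (hu : C u = none)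
    (hv : C v = none) :
    ∃ f : V → Fin (m + 1) ⊕ (Fin (k - 1) × Fin m), Function.Injective f ∧
      (∀ w, part (f w) = C w) ∧ (KplusGraph k m).Adj (f u) (f v) := by
  obtain ⟨f, hf, hpart⟩ := exists_injective_forall_part_eq hnone hsome
  obtain ⟨a, ha⟩ := part_eq_none_iff.1 ((hpart u).trans hu)
  obtain ⟨b, hb⟩ := part_eq_none_iff.1 ((hpart v).trans hv)
  have hab : a ≠ b := fun h ↦ huv (hf (by rw [ha, hb, h]))
  have : NeZero m := ⟨by rintro rfl; exact hab (Subsingleton.elim (α := Fin 1) a b)⟩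
  obtain ⟨σ, hσa, hσb⟩ : ∃ σ : Equiv.Perm (Fin (m + 1)), σ a = 0 ∧ σ b = 1 :=
    MulAction.is_two_pretransitive_iff.1 (Equiv.Perm.isMultiplyPretransitive _ 2) hab zero_ne_one
  refine ⟨Sum.map σ id ∘ f, (σ.injective.sumMap Function.injective_id).comp hf,
    fun w ↦ (part_map_id σ (f w)).trans (hpart w), ?_⟩
  simpa only [Function.comp_apply, ha, hb, Sum.map_inl, hσa, hσb]
    using adj_inl_zero_inl_one

end KplusGraph

section

variable {V : Type*} [Finite V] {G : SimpleGraph V} {k m : ℕ} {u v : V}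

open KplusGraph in
theorem containsCopy_KplusGraph_of_ncard_colorClass_le
    (C : (G.deleteEdges {s(u, v)}).Coloring (Option (Fin (k - 1)))) (hu : C u = none)
    (hnone : (C.colorClass none).ncard ≤ m + 1) (hsome : ∀ i, (C.colorClass (some i)).ncard ≤ m) :
    containsCopy (KplusGraph k m) G := by
  obtain ⟨f, hf, hpart, hadj⟩ : ∃ f : V → Fin (m + 1) ⊕ (Fin (k - 1) × Fin m),
      Function.Injective f ∧ (∀ w, part (f w) = C w) ∧
        (u ≠ v → C v = none → (KplusGraph k m).Adj (f u) (f v)) := by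
    by_cases huv : u ≠ v ∧ C v = none
    · obtain ⟨f, hf, hpart, hadj⟩ :=
        exists_injective_forall_part_eq_and_adj hnone hsome huv.1 hu huv.2
      exact ⟨f, hf, hpart, fun _ _ ↦ hadj⟩
    · obtain ⟨f, hf, hpart⟩ := exists_injective_forall_part_eq hnone hsome
      exact ⟨f, hf, hpart, fun hne hv ↦ absurd ⟨hne, hv⟩ huv⟩
  refine ⟨⟨f, fun {a b} hab ↦ ?_⟩, hf⟩
  by_cases hC : C a = C b
  · have he : s(a, b) = s(u, v) := by
      by_contra he
      exact C.valid (deleteEdges_adj.2 ⟨hab, he⟩) hC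
    rcases Sym2.eq_iff.1 he with ⟨rfl, rfl⟩ | ⟨rfl, rfl⟩
    · exact hadj hab.ne (hC.symm.trans hu)
    · exact (hadj hab.ne' (hC.trans hu)).symm
  · exact adj_of_part_ne (by simpa only [hpart] using hC)

theorem statement_13_general (h : (G.deleteEdges {s(u, v)}).Colorable k) :
    containsCopy (KplusGraph k (maxClassSize G (k + 1))) G := by
  obtain ⟨C₀⟩ := h
  obtain ⟨n, rfl⟩ : ∃ n, k = n + 1 := Nat.exists_eq_succ_of_ne_zero (C₀ u).pos.ne'
  let C := (G.deleteEdges {s(u, v)}).recolorOfEquiv (finSuccEquiv' (C₀ u)) C₀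
  have hclass i : (C.colorClass i \ {u}).ncard ≤ maxClassSize G (n + 1 + 1) := by
    have hle := ncard_colorClass_sdiff_singleton_le_maxClassSize
      (C.comp (Hom.ofLE deleteIncidenceSet_le_deleteEdges)) i
    rwa [Finite.card_option, Nat.card_fin] at hle
  have hu : C u = none := finSuccEquiv'_at (C₀ u)
  refine containsCopy_KplusGraph_of_ncard_colorClass_le C hu ?_ fun i ↦ ?_
  · rw [← Set.ncard_sdiff_singleton_add_one (show u ∈ C.colorClass none from hu)]
    exact Nat.succ_le_succ (hclass none)
  · have hui : u ∉ C.colorClass (some i) := fun h ↦ Option.some_ne_none i (h.symm.trans hu)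
    simpa only [Set.sdiff_singleton_eq_self hui] using hclass (some i)

end

theorem EdgeCritical.exists_colorable_deleteEdges {V : Type*} {G : SimpleGraph V} {k : ℕ}
    (hcrit : EdgeCritical G) (hchi : G.chromaticNumber = (k + 1 : ℕ)) :
    ∃ u v, (G.deleteEdges {s(u, v)}).Colorable k := by
  obtain ⟨u, v, -, h⟩ := hcrit
  refine ⟨u, v, chromaticNumber_le_iff_colorable.1 ?_⟩
  rw [hchi, Nat.cast_add, Nat.cast_one] at h
  exact (ENat.add_left_injective_of_ne_top ENat.one_ne_top h).le

theorem statement_13 (k : ℕ) {V : Type*} [Fintype V] (G : SimpleGraph V)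
    (hchi : G.chromaticNumber = (k + 1 : ℕ)) (hcrit : EdgeCritical G) :
    containsCopy (KplusGraph k (maxClassSize G (k + 1))) G := by
  obtain ⟨u, v, h⟩ := hcrit.exists_colorable_deleteEdges hchi
  exact statement_13_general h
end

section
/- Let k ≥ 2 and t ≥ 2 be fixed integers. Then there exists n₀ such that for all integers n ≥ n₀, the star-critical Ramsey number satisfies r₊(K_{k+1}, K₁ + nK_t) = (k−1)·t·n + t. -/
open SimpleGraph

/-!
Write `q = t * n`. For the lower bound, split `K_{kq}` into `k` blocks of size `q`, let the new
vertex join the last block, and colour the edges between different blocks red. A blue fan needs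
`q + 1` vertices in one block, hence the new vertex, whose blue degree is less than `t`.

Conversely, suppose there is neither a red `K_{k+1}` nor a blue fan. By Erdős and Szekeres every
set of `M = (k + t - 1).choose k` vertices of `K_{kq}` contains a blue `K_t`, so the blue
neighbourhood of a vertex, from which blue copies of `K_t` can be removed greedily, has fewer than
`q + M` elements. The Andrásfai–Erdős–Sós theorem now makes the red graph on `K_{kq}` `k`-partite.
Its colour classes are blue cliques, so each has exactly `q` vertices, and a vertex is joined in
red to all but at most `M` vertices of every other class. The new vertex has fewer than `t` blue
neighbours in each class, so its red neighbours are numerous enough to contain a red `K_k`, which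
is chosen greedily.
-/

open scoped Finset

variable {V W ι : Type*}

theorem containsCopy_iff_isContained_s16 {F : SimpleGraph V} {G : SimpleGraph W} :
    containsCopy F G ↔ G ⊑ F :=
  ⟨fun ⟨f, hf⟩ ↦ ⟨⟨f, hf⟩⟩, fun ⟨f⟩ ↦ ⟨f.toHom, f.injective⟩⟩

theorem containsCopy_completeGraph_fin {F : SimpleGraph V} {n : ℕ} :
    containsCopy F (completeGraph (Fin n)) ↔ ¬ F.CliqueFree n := by
  rw [containsCopy_iff_isContained_s16, not_cliqueFree_iff_top_isContained]

theorem containsCopy.trans {U : Type*} {E : SimpleGraph U} {F : SimpleGraph V}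
    {G : SimpleGraph W} (hFG : containsCopy F G) (hEF : F ⊑ E) : containsCopy E G :=
  containsCopy_iff_isContained_s16.2 ((containsCopy_iff_isContained_s16.1 hFG).trans hEF)

theorem comap_isContained (f : V ↪ W) (G : SimpleGraph W) : G.comap f ⊑ G :=
  ⟨(Embedding.comap f G).toCopy⟩

section StarCritical

variable {G : SimpleGraph V} {H : SimpleGraph W} {m N ℓ : ℕ}

@[simp]
theorem KstarK_adj_some_some {i j : Fin m} : (KstarK m ℓ).Adj (some i) (some j) ↔ i ≠ j := by
  simp [KstarK, fromRel_adj]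

@[simp]
theorem KstarK_adj_none_some {j : Fin m} : (KstarK m ℓ).Adj none (some j) ↔ (j : ℕ) < ℓ := by
  simp [KstarK, fromRel_adj]

theorem comap_some_KstarK_sdiff (R : SimpleGraph (Option (Fin m))) :
    (KstarK m ℓ \ R).comap Function.Embedding.some = (R.comap Function.Embedding.some)ᶜ := by
  ext i j
  simp

theorem arrows_mono (hN : N ≤ m) (h : arrows N G H) : arrows m G H := fun R ↦
  (h (R.comap (Fin.castLEEmb hN))).imp (·.trans (comap_isContained _ R))
    (·.trans ⟨(Embedding.complEquiv (Embedding.comap _ R)).toCopy⟩)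

theorem starArrows_of_arrows (h : arrows m G H) : starArrows m ℓ G H := fun R _ ↦
  (h (R.comap Function.Embedding.some)).imp (·.trans (comap_isContained _ R)) fun hH ↦ by
    rw [← comap_some_KstarK_sdiff (ℓ := ℓ)] at hH
    exact hH.trans (comap_isContained _ _)

theorem arrows_succ_of_starArrows (h : starArrows m ℓ G H) : arrows (m + 1) G H := by
  intro R
  let e : Option (Fin m) ≃ Fin (m + 1) := finSuccEquivLast.symm
  have hblue : KstarK m ℓ \ (R.comap e ⊓ KstarK m ℓ) ≤ Rᶜ.comap e := by
    intro x y hxy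
    simp only [sdiff_adj, inf_adj, comap_adj, not_and] at hxy
    exact (compl_adj _ _ _).2 ⟨e.injective.ne hxy.1.ne, fun hR ↦ hxy.2 hR hxy.1⟩
  refine (h (R.comap e ⊓ KstarK m ℓ) inf_le_right).imp (fun hG ↦ ?_) (fun hH ↦ ?_)
  · exact hG.trans ((IsContained.of_le inf_le_left).trans ⟨(Iso.comap e R).toCopy⟩)
  · exact hH.trans ((IsContained.of_le hblue).trans ⟨(Iso.comap e Rᶜ).toCopy⟩)

theorem ramseyNumber_eq_succ_of_starArrows (h : starArrows m ℓ G H)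
    (h₀ : ¬ starArrows m 0 G H) : ramseyNumber G H = m + 1 := by
  have hmem : m + 1 ∈ {N | 0 < N ∧ arrows N G H} := ⟨m.succ_pos, arrows_succ_of_starArrows h⟩
  refine le_antisymm (Nat.sInf_le hmem) (le_csInf ⟨_, hmem⟩ fun N hN ↦ ?_)
  by_contra! hlt
  exact h₀ (starArrows_of_arrows (arrows_mono (Nat.le_of_lt_succ hlt) hN.2))

theorem starRamsey_eq_of_starArrows (hℓ : 0 < ℓ) (h : starArrows m ℓ G H)
    (hlt : ∀ ℓ' < ℓ, ¬ starArrows m ℓ' G H) : starRamsey G H = ℓ := by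
  rw [starRamsey, ramseyNumber_eq_succ_of_starArrows h (hlt 0 hℓ), Nat.add_sub_cancel]
  refine le_antisymm (Nat.sInf_le h) (le_csInf ⟨ℓ, h⟩ fun ℓ' hℓ' ↦ ?_)
  exact not_lt.1 fun h' ↦ hlt ℓ' h' hℓ'

end StarCritical

theorem exists_isNClique_succ_of_forall_adj {G : SimpleGraph V} {c : ℕ} {S S' : Finset V} {x : V}
    (hS' : S' ⊆ S) (hx : x ∈ S) (hadj : ∀ y ∈ S', G.Adj x y)
    (h : ∃ T ⊆ S', G.IsNClique c T) : ∃ T ⊆ S, G.IsNClique (c + 1) T := by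
  classical
  obtain ⟨T, hT, hclique⟩ := h
  exact ⟨insert x T, Finset.insert_subset hx (hT.trans hS'),
    hclique.insert fun y hy ↦ hadj y (hT hy)⟩

theorem exists_isNClique_or_isNClique_compl (G : SimpleGraph V) (a b : ℕ) (S : Finset V)
    (hS : (a + b).choose a ≤ #S) :
    (∃ T ⊆ S, G.IsNClique (a + 1) T) ∨ ∃ T ⊆ S, Gᶜ.IsNClique (b + 1) T := by
  classical
  obtain ⟨x, hx⟩ : S.Nonempty :=
    Finset.card_pos.1 ((Nat.choose_pos (Nat.le_add_right a b)).trans_le hS)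
  induction a generalizing b S x with
  | zero => exact .inl ⟨{x}, by simpa using hx, by simp⟩
  | succ a iha =>
    induction b generalizing S x with
    | zero => exact .inr ⟨{x}, by simpa using hx, by simp⟩
    | succ b ihb =>
      let A : Finset V := {y ∈ S.erase x | G.Adj x y}
      let B : Finset V := {y ∈ S.erase x | ¬ G.Adj x y}
      have hAS : A ⊆ S := (Finset.filter_subset _ _).trans (S.erase_subset x)
      have hBS : B ⊆ S := (Finset.filter_subset _ _).trans (S.erase_subset x)
      have hxA (y : V) (hy : y ∈ A) : G.Adj x y := (Finset.mem_filter.1 hy).2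
      have hxB (y : V) (hy : y ∈ B) : Gᶜ.Adj x y := by
        obtain ⟨hyS, hadj⟩ := Finset.mem_filter.1 hy
        exact (compl_adj _ _ _).2 ⟨(Finset.ne_of_mem_erase hyS).symm, hadj⟩
      have hpascal : (a + 1 + (b + 1)).choose (a + 1) =
          (a + (b + 1)).choose a + (a + 1 + b).choose (a + 1) := by
        rw [show a + 1 + (b + 1) = a + (b + 1) + 1 by omega, Nat.choose_succ_succ,
          show a + (b + 1) = a + 1 + b by omega]
      have hsplit : #A + #B = #S - 1 := by
        rw [← Finset.card_erase_of_mem hx]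
        exact Finset.card_filter_add_card_filter_not _
      have hAB : (a + (b + 1)).choose a ≤ #A ∨ (a + 1 + b).choose (a + 1) ≤ #B := by omega
      rcases hAB with hA | hB
      · obtain ⟨y, hy⟩ := Finset.card_pos.1 ((Nat.choose_pos (Nat.le_add_right _ _)).trans_le hA)
        exact (iha (b + 1) A hA y hy).imp (exists_isNClique_succ_of_forall_adj hAS hx hxA)
          fun ⟨T, hT, h⟩ ↦ ⟨T, hT.trans hAS, h⟩
      · obtain ⟨y, hy⟩ := Finset.card_pos.1 ((Nat.choose_pos (Nat.le_add_right _ _)).trans_le hB)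
        exact (ihb B hB y hy).imp (fun ⟨T, hT, h⟩ ↦ ⟨T, hT.trans hBS, h⟩)
          (exists_isNClique_succ_of_forall_adj hBS hx hxB)

/-- `S` contains `n` pairwise disjoint `t`-cliques of `G`, i.e. a copy of `nK_t`. The cliques are
indexed by `Fin n`, so that for `t = 0` they need not be distinct. -/
def HasDisjointCliques (G : SimpleGraph V) (t n : ℕ) (S : Finset V) : Prop :=
  ∃ T : Fin n → Finset V, Pairwise (Function.onFun Disjoint T) ∧
    ∀ i, T i ⊆ S ∧ G.IsNClique t (T i)

namespace HasDisjointCliques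

variable {G : SimpleGraph V} {t n M : ℕ} {S T : Finset V}

theorem union [DecidableEq V] (hT : G.IsNClique t T) (hTS : Disjoint T S)
    (h : HasDisjointCliques G t n S) : HasDisjointCliques G t (n + 1) (T ∪ S) := by
  obtain ⟨F, hdisj, hF⟩ := h
  refine ⟨Fin.cons T F, ?_, Fin.cases ⟨Finset.subset_union_left, hT⟩ fun i ↦
    ⟨(hF i).1.trans Finset.subset_union_right, (hF i).2⟩⟩
  intro i j hij
  cases i using Fin.cases with
  | zero =>
    cases j using Fin.cases with
    | zero => exact absurd rfl hij
    | succ j => exact hTS.mono_right (hF j).1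
  | succ i =>
    cases j using Fin.cases with
    | zero => exact (hTS.mono_right (hF i).1).symm
    | succ j => exact hdisj fun h ↦ hij (congrArg Fin.succ h)

theorem of_forall_exists_isNClique (h : ∀ S' ⊆ S, M ≤ #S' → ∃ T ⊆ S', G.IsNClique t T)
    (hS : t * n + M ≤ #S + t) : HasDisjointCliques G t n S := by
  classical
  induction n generalizing S with
  | zero => exact ⟨Fin.elim0, fun i ↦ i.elim0, fun i ↦ i.elim0⟩
  | succ n ih =>
    rw [mul_add, mul_one] at hS
    obtain ⟨T, hTS, hT⟩ := h S subset_rfl (by omega)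
    rw [← Finset.union_sdiff_of_subset hTS]
    refine union hT Finset.disjoint_sdiff
      (ih (fun S' hS' ↦ h S' (hS'.trans Finset.sdiff_subset)) ?_)
    rw [Finset.card_sdiff_of_subset hTS, hT.card_eq]
    omega

theorem of_isClique (h : G.IsClique S) (hS : t * n ≤ #S) : HasDisjointCliques G t n S := by
  refine of_forall_exists_isNClique (M := t) (fun S' hS' hc ↦ ?_) (by omega)
  obtain ⟨T, hT, hTc⟩ := Finset.exists_subset_card_eq hc
  exact ⟨T, hT, h.subset (Finset.coe_subset.2 (hT.trans hS')), hTc⟩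

end HasDisjointCliques

section GenFan

variable {G : SimpleGraph V} {t n M : ℕ}

@[simp]
theorem genFan_adj_none_some {p : Fin n × Fin t} : (genFan n t).Adj none (some p) := by
  simp [genFan, fromRel_adj]

@[simp]
theorem genFan_adj_some_some {p q : Fin n × Fin t} :
    (genFan n t).Adj (some p) (some q) ↔ p ≠ q ∧ p.1 = q.1 := by
  obtain ⟨i, a⟩ := p
  obtain ⟨j, b⟩ := q
  simp only [genFan, fromRel_adj]
  grind

theorem HasDisjointCliques.containsCopy_genFan {S : Finset V} {c : V} (hc : ∀ x ∈ S, G.Adj c x)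
    (h : HasDisjointCliques G t n S) : containsCopy G (genFan n t) := by
  obtain ⟨T, hdisj, hT⟩ := h
  let e (i : Fin n) : Fin t ≃ T i := ((T i).equivFinOfCardEq (hT i).2.card_eq).symm
  let f : Option (Fin n × Fin t) → V := fun o ↦ o.elim c fun p ↦ e p.1 p.2
  have hcf (p : Fin n × Fin t) : G.Adj (f none) (f (some p)) := hc _ ((hT p.1).1 (e p.1 p.2).2)
  have hinj (p q : Fin n × Fin t) (h : f (some p) = f (some q)) : p = q := by
    obtain ⟨i, a⟩ := p
    obtain ⟨j, b⟩ := q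
    obtain rfl : i = j := by
      by_contra hij
      have hab : (e i a : V) = e j b := h
      exact Finset.disjoint_left.1 (hdisj hij) (e i a).2 (hab ▸ (e j b).2)
    simpa [f] using h
  refine ⟨⟨f, fun {x y} hxy ↦ ?_⟩, fun x y hxy ↦ ?_⟩
  · rcases x with _ | p <;> rcases y with _ | q
    · exact absurd rfl hxy.ne
    · exact hcf q
    · exact (hcf p).symm
    · obtain ⟨hpq, hfst⟩ := genFan_adj_some_some.1 hxy
      exact (hT p.1).2.isClique (e p.1 p.2).2 (hfst ▸ (e q.1 q.2).2) fun h ↦ hpq (hinj p q h)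
  · rcases x with _ | p <;> rcases y with _ | q
    · rfl
    · exact absurd hxy (hcf q).ne
    · exact absurd hxy (hcf p).ne'
    · exact congrArg some (hinj p q hxy)

theorem degree_add_lt_of_not_containsCopy_genFan {x : V} [Fintype (G.neighborSet x)]
    (hM : ∀ S : Finset V, M ≤ #S → ∃ T ⊆ S, G.IsNClique t T)
    (hG : ¬ containsCopy G (genFan n t)) : G.degree x + t < t * n + M := by
  by_contra! h
  refine hG (HasDisjointCliques.containsCopy_genFan (S := G.neighborFinset x) (c := x)
    (fun y hy ↦ (mem_neighborFinset _ _ _).1 hy) ?_)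
  exact .of_forall_exists_isNClique (fun S _ ↦ hM S) h

theorem containsCopy_genFan_of_isClique {Q : Finset V} (hQ : G.IsClique Q)
    (hcard : t * n < #Q) : containsCopy G (genFan n t) := by
  have hfan : genFan n t ⊑ completeGraph (Fin (t * n + 1)) :=
    isContained_top_iff.2 (Function.Embedding.nonempty_of_card_le (by simp [mul_comm]))
  have hfree : ¬ G.CliqueFree (t * n + 1) := fun h ↦ h.mono hcard Q ⟨hQ, rfl⟩
  exact (containsCopy_iff_isContained_s16.2 hfan).trans
    ((not_cliqueFree_iff_top_isContained _).1 hfree)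

/-- The hub of the fan is a neighbour of `v` in `Q`, whose place in one of the cliques `v` takes. -/
theorem containsCopy_genFan_of_le_card_filter_adj [DecidableRel G.Adj] {Q : Finset V}
    {v : V} (ht : 0 < t) (hn : 0 < n) (hQ : G.IsClique Q) (hcard : #Q = t * n) (hv : v ∉ Q)
    (hadj : t ≤ #{y ∈ Q | G.Adj v y}) : containsCopy G (genFan n t) := by
  classical
  obtain ⟨U, hU, hUcard⟩ := Finset.exists_subset_card_eq hadj
  have hUQ : U ⊆ Q := hU.trans (Finset.filter_subset _ _)
  have hvU (y : V) (hy : y ∈ U) : G.Adj v y := (Finset.mem_filter.1 (hU hy)).2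
  have hUclique : G.IsNClique t U := ⟨hQ.subset (Finset.coe_subset.2 hUQ), hUcard⟩
  obtain ⟨x, hx⟩ : U.Nonempty := Finset.card_pos.1 (hUcard ▸ ht)
  have hfirst : G.IsNClique t (insert v (U.erase x)) := by
    simpa [Nat.sub_add_cancel ht] using
      (hUclique.erase_of_mem hx).insert fun y hy ↦ hvU y (Finset.mem_of_mem_erase hy)
  have hrest : HasDisjointCliques G t (n - 1) (Q \ U) := by
    refine .of_isClique (hQ.subset (by simp)) ?_
    rw [Finset.card_sdiff_of_subset hUQ, hcard, hUcard, Nat.mul_sub_one]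
  have hdisj : Disjoint (insert v (U.erase x)) (Q \ U) := by
    refine Finset.disjoint_insert_left.2 ⟨fun h ↦ hv (Finset.mem_sdiff.1 h).1, ?_⟩
    exact Finset.disjoint_sdiff.mono_left (U.erase_subset x)
  have hall := hrest.union hfirst hdisj
  rw [Nat.sub_add_cancel hn] at hall
  refine hall.containsCopy_genFan (c := x) fun y hy ↦ ?_
  simp only [Finset.mem_union, Finset.mem_insert, Finset.mem_erase, Finset.mem_sdiff] at hy
  rcases hy with (rfl | ⟨hyx, hyU⟩) | ⟨hyQ, hyU⟩
  · exact (hvU x hx).symm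
  · exact hQ (hUQ hx) (hUQ hyU) hyx.symm
  · exact hQ (hUQ hx) hyQ fun h ↦ hyU (h ▸ hx)

theorem le_degree_genFan (hn : 0 < n) (w : Option (Fin n × Fin t))
    [Fintype ((genFan n t).neighborSet w)] : t ≤ (genFan n t).degree w := by
  classical
  obtain ⟨g, hg, hadj⟩ : ∃ g : Fin t → Option (Fin n × Fin t), Function.Injective g ∧
      ∀ a, (genFan n t).Adj w (g a) := by
    rcases w with _ | ⟨i, a⟩
    · exact ⟨fun a ↦ some (⟨0, hn⟩, a), fun a b h ↦ by simpa using h, fun a ↦ by simp⟩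
    · refine ⟨fun b ↦ if b = a then none else some (i, b), fun b c h ↦ ?_, fun b ↦ ?_⟩
      · by_cases hb : b = a <;> by_cases hc : c = a <;> simp_all
      · by_cases hb : b = a
        · simpa [hb] using genFan_adj_none_some.symm
        · simp [hb, Ne.symm hb]
  calc t = (Finset.univ.image g).card := by simp [Finset.card_image_of_injective _ hg]
    _ ≤ (genFan n t).degree w := Finset.card_le_card fun y hy ↦ by
      obtain ⟨a, -, rfl⟩ := Finset.mem_image.1 hy
      simpa using hadj a

end GenFan

section LowerBound

variable {k q t n ℓ : ℕ}

/-- The partition of the vertices of `K_{(k+1)q} ⊔ K_{1,ℓ}` into `k + 1` classes behind the lower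
bound: consecutive blocks of `q` vertices, with the additional vertex put into the last block. -/
def blockColor (k q : ℕ) : Option (Fin ((k + 1) * q)) → Fin (k + 1) :=
  fun o ↦ o.elim (Fin.last k) Fin.divNat

/-- The red graph of the lower bound: the edges of `K_{(k+1)q} ⊔ K_{1,ℓ}` between different
blocks of `blockColor k q`. -/
def blockRed (k q ℓ : ℕ) : SimpleGraph (Option (Fin ((k + 1) * q))) :=
  KstarK ((k + 1) * q) ℓ ⊓ (⊤ : SimpleGraph (Fin (k + 1))).comap (blockColor k q)

theorem blockRed_cliqueFree : (blockRed k q ℓ).CliqueFree (k + 2) := by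
  have hcol : (blockRed k q ℓ).Colorable (k + 1) :=
    ⟨Coloring.mk (blockColor k q) fun {_ _} h ↦ by simpa using h.2⟩
  exact hcol.cliqueFree (Nat.lt_succ_self _)

theorem sdiff_blockRed_adj {x y : Option (Fin ((k + 1) * q))} :
    (KstarK ((k + 1) * q) ℓ \ blockRed k q ℓ).Adj x y ↔
      (KstarK ((k + 1) * q) ℓ).Adj x y ∧ blockColor k q x = blockColor k q y := by
  simp [blockRed]

theorem degree_none_sdiff_blockRed_le
    [Fintype ((KstarK ((k + 1) * q) ℓ \ blockRed k q ℓ).neighborSet none)] :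
    (KstarK ((k + 1) * q) ℓ \ blockRed k q ℓ).degree none ≤ ℓ - k * q := by
  classical
  have hsub : (KstarK ((k + 1) * q) ℓ \ blockRed k q ℓ).neighborFinset none ⊆
      Finset.map .some {y : Fin _ | k * q ≤ y ∧ (y : ℕ) < ℓ} := by
    intro x hx
    rw [mem_neighborFinset, sdiff_blockRed_adj] at hx
    rcases x with _ | y
    · exact absurd rfl hx.1.ne
    · have hdiv : k = (y : ℕ) / q := congrArg Fin.val hx.2
      refine Finset.mem_map_of_mem _ (Finset.mem_filter.2 ⟨Finset.mem_univ _, ?_, ?_⟩)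
      · exact (Nat.mul_le_mul_right q hdiv.le).trans (Nat.div_mul_le_self _ _)
      · exact KstarK_adj_none_some.1 hx.1
  have hIco : #{y : Fin ((k + 1) * q) | k * q ≤ y ∧ (y : ℕ) < ℓ} ≤ #(Finset.Ico (k * q) ℓ) :=
    Finset.card_le_card_of_injOn Fin.val (fun y hy ↦ by simpa using hy) Fin.val_injective.injOn
  rw [Nat.card_Ico] at hIco
  exact (Finset.card_le_card hsub).trans ((Finset.card_map _).trans_le hIco)

theorem not_containsCopy_genFan_sdiff_blockRed (ht : 0 < t) (hn : 0 < n)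
    (hℓ : ℓ < k * (t * n) + t) :
    ¬ containsCopy (KstarK ((k + 1) * (t * n)) ℓ \ blockRed k (t * n) ℓ) (genFan n t) := by
  classical
  rintro ⟨f, hf⟩
  have hnone (w : Option (Fin n × Fin t)) : f w ≠ none := fun hw ↦ by
    have hdeg : t ≤ (KstarK ((k + 1) * (t * n)) ℓ \ blockRed k (t * n) ℓ).degree (f w) :=
      (le_degree_genFan hn w).trans (Copy.degree_le (f.toCopy hf) w)
    rw [hw] at hdeg
    have := hdeg.trans degree_none_sdiff_blockRed_le
    omega
  choose y hy using fun w ↦ Option.ne_none_iff_exists'.1 (hnone w)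
  have hblock (w : Option (Fin n × Fin t)) : (y w).divNat = (y none).divNat := by
    rcases w with _ | p
    · rfl
    · have hadj := (sdiff_blockRed_adj.1 (f.map_adj (genFan_adj_none_some (p := p)))).2
      rw [hy, hy] at hadj
      exact hadj.symm
  have hinj : Function.Injective fun w ↦ (y w).modNat := fun w w' h ↦ by
    have hyy : y w = y w' := finProdFinEquiv.symm.injective
      (Prod.ext ((hblock w).trans (hblock w').symm) h)
    exact hf (by rw [hy, hy, hyy])
  have hcard := Fintype.card_le_of_injective _ hinj
  simp only [Fintype.card_option, Fintype.card_prod, Fintype.card_fin] at hcard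
  rw [mul_comm] at hcard
  omega

theorem not_starArrows_completeGraph_genFan (ht : 0 < t) (hn : 0 < n)
    (hℓ : ℓ < k * (t * n) + t) :
    ¬ starArrows ((k + 1) * (t * n)) ℓ (completeGraph (Fin (k + 2))) (genFan n t) := fun h ↦
  (h (blockRed k (t * n) ℓ) inf_le_left).elim
    (fun hred ↦ containsCopy_completeGraph_fin.1 hred blockRed_cliqueFree)
    (not_containsCopy_genFan_sdiff_blockRed ht hn hℓ)

end LowerBound

section Partition

variable [Fintype ι] {q t M : ℕ}

theorem card_mul_add_le_sum_add {e : ι → ℕ} (hle : ∀ i, e i ≤ q)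
    (hsum : Fintype.card ι * q + t ≤ ∑ i, e i + q) (s : Finset ι) :
    #s * q + t ≤ ∑ i ∈ s, e i + q := by
  classical
  have hcompl : ∑ i ∈ sᶜ, e i ≤ #sᶜ * q := by
    simpa using Finset.sum_le_card_nsmul sᶜ e q fun i _ ↦ hle i
  rw [← Finset.sum_add_sum_compl s, ← Finset.card_add_card_compl s, add_mul] at hsum
  omega

variable [Fintype V] [DecidableEq ι] {R : SimpleGraph V} [DecidableRel R.Adj] {f : V → ι}

theorem card_fiber_eq_of_forall_le (hV : Fintype.card V = Fintype.card ι * q)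
    (hle : ∀ i, #{x | f x = i} ≤ q) (i : ι) : #{x | f x = i} = q := by
  have hsum : ∑ i, #{x | f x = i} = ∑ _i : ι, q := by
    rw [← Finset.card_eq_sum_card_fiberwise fun _ _ ↦ Finset.mem_univ _]
    simpa using hV
  exact (Finset.sum_eq_sum_iff_of_le fun i _ ↦ hle i).1 hsum i (Finset.mem_univ i)

theorem exists_isNClique_insert_of_card_filter_not_adj_le
    (hnon : ∀ x i, f x ≠ i → #{y | f y = i ∧ ¬ R.Adj x y} ≤ M)
    {S : Finset V} {x : V} (hx : x ∈ S) (I : Finset ι) (hxI : f x ∉ I)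
    (hI : ∀ i ∈ I, Fintype.card ι * M < #{x ∈ S | f x = i}) :
    ∃ T ⊆ S, R.IsNClique (#I + 1) T ∧ ∀ y ∈ T, f y ∈ insert (f x) I := by
  classical
  induction I using Finset.induction_on with
  | empty => exact ⟨{x}, by simpa using hx, by simp, by simp⟩
  | insert i I hi ih =>
    rw [Finset.mem_insert, not_or] at hxI
    obtain ⟨T, hTS, hT, hTI⟩ := ih hxI.2 fun j hj ↦ hI j (Finset.mem_insert_of_mem hj)
    have hTcard : #T ≤ Fintype.card ι := by
      rw [hT.card_eq, ← Finset.card_insert_of_notMem hi]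
      exact Finset.card_le_univ _
    have hTi (z : V) (hz : z ∈ T) : f z ≠ i := by
      rintro rfl
      exact (Finset.mem_insert.1 (hTI z hz)).elim (fun h ↦ hxI.1 h.symm) hi
    have hbad : #(T.biUnion fun z ↦ {y | f y = i ∧ ¬ R.Adj z y}) < #{x ∈ S | f x = i} :=
      calc _ ≤ #T * M := Finset.card_biUnion_le_card_mul _ _ _ fun z hz ↦ hnon z i (hTi z hz)
        _ ≤ Fintype.card ι * M := Nat.mul_le_mul_right M hTcard
        _ < _ := hI i (Finset.mem_insert_self i I)
    obtain ⟨y, hyS, hyT⟩ := Finset.exists_mem_notMem_of_card_lt_card hbad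
    obtain ⟨hyS, hyi⟩ := Finset.mem_filter.1 hyS
    have hyadj (z : V) (hz : z ∈ T) : R.Adj y z := by
      by_contra hyz
      exact hyT (Finset.mem_biUnion.2 ⟨z, hz, by simpa [hyi] using fun h ↦ hyz h.symm⟩)
    refine ⟨insert y T, Finset.insert_subset hyS hTS, ?_, fun z hz ↦ ?_⟩
    · rw [Finset.card_insert_of_notMem hi]
      exact hT.insert hyadj
    · rcases Finset.mem_insert.1 hz with rfl | hz
      · simp [hyi]
      · exact Finset.insert_subset_insert _ (Finset.subset_insert i I) (hTI z hz)

/-- Each fiber has at least `t` vertices in `E`, and each but one at least `(q + t) / 2`. So after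
the removal of `D` the greedy choice succeeds if it starts in the exceptional fiber. -/
theorem exists_isNClique_sdiff_of_card_fiber_le [DecidableEq V] [Nonempty ι]
    (hfib : ∀ i, #{x | f x = i} ≤ q)
    (hnon : ∀ x i, f x ≠ i → #{y | f y = i ∧ ¬ R.Adj x y} ≤ M)
    (hq : 2 * (Fintype.card ι * M) + t ≤ q + 1) {E D : Finset V}
    (hE : Fintype.card ι * q + t ≤ #E + q)
    (hD : ∀ i, #{x ∈ D | f x = i} < t) :
    ∃ T ⊆ E \ D, R.IsNClique (Fintype.card ι) T := by
  let e (i : ι) : ℕ := #{x ∈ E | f x = i}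
  have he (i : ι) : e i ≤ q :=
    (Finset.card_le_card (Finset.filter_subset_filter _ E.subset_univ)).trans (hfib i)
  have hsum : Fintype.card ι * q + t ≤ ∑ i, e i + q := by
    rwa [← Finset.card_eq_sum_card_fiberwise fun _ _ ↦ Finset.mem_univ _]
  have hsdiff (i : ι) : e i < #{x ∈ E \ D | f x = i} + t := by
    have hsub : E.filter (f · = i) \ D.filter (f · = i) ⊆ (E \ D).filter (f · = i) := by grind
    have hle : e i - #{x ∈ D | f x = i} ≤ #{x ∈ E \ D | f x = i} :=
      (Finset.le_card_sdiff _ _).trans (Finset.card_le_card hsub)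
    have := hD i
    omega
  obtain ⟨i₀, -, hi₀⟩ := Finset.exists_min_image Finset.univ e Finset.univ_nonempty
  have hlarge (i : ι) (hi : i ≠ i₀) :
      Fintype.card ι * M < #{x ∈ E \ D | f x = i} := by
    have h₁ := card_mul_add_le_sum_add he hsum {i, i₀}
    rw [Finset.card_pair hi, Finset.sum_pair hi] at h₁
    have h₂ := hi₀ i (Finset.mem_univ i)
    have h₃ := hsdiff i
    omega
  have hpos : t ≤ e i₀ := by
    simpa [add_comm] using card_mul_add_le_sum_add he hsum {i₀}
  obtain ⟨x, hx⟩ : ((E \ D).filter (f · = i₀)).Nonempty :=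
    Finset.card_pos.1 (by have := hsdiff i₀; omega)
  obtain ⟨hxE, rfl⟩ := Finset.mem_filter.1 hx
  obtain ⟨T, hTE, hT, -⟩ := exists_isNClique_insert_of_card_filter_not_adj_le hnon hxE
    (Finset.univ.erase (f x)) (by simp) fun i hi ↦ hlarge i (Finset.ne_of_mem_erase hi)
  refine ⟨T, hTE, ?_⟩
  rwa [Finset.card_erase_add_one (Finset.mem_univ _), Finset.card_univ] at hT

end Partition

section UpperBound

section Coloring

variable [Fintype V] {R : SimpleGraph V} {k q t n M : ℕ}

theorem isClique_compl_filter_coloring [DecidableEq ι] (C : R.Coloring ι) (i : ι) :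
    Rᶜ.IsClique ({x | C x = i} : Finset V) := by
  intro x hx y hy hxy
  simp only [Finset.coe_filter, Finset.mem_univ, true_and, Set.mem_ofPred_eq] at hx hy
  exact (compl_adj _ _ _).2 ⟨hxy, fun h ↦ C.valid h (hx.trans hy.symm)⟩

variable [DecidableRel R.Adj]

theorem colorable_of_forall_degree_compl_lt [DecidableEq V] (hk : 0 < k)
    (hV : Fintype.card V = k * q) (hfree : R.CliqueFree (k + 1))
    (hdeg : ∀ x, Rᶜ.degree x < q + M) (hq : 3 * k * M < q) : R.Colorable k := by
  obtain rfl | ⟨j, rfl⟩ : k = 1 ∨ ∃ j, k = j + 2 :=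
    (Nat.eq_or_lt_of_le hk).imp Eq.symm fun h ↦ ⟨k - 2, by omega⟩
  · exact colorable_one_iff.2 (cliqueFree_two.1 hfree)
  have hqpos : 0 < q := by omega
  have : Nonempty V := Fintype.card_pos_iff.1 (by rw [hV]; positivity)
  refine colorable_of_cliqueFree_lt_minDegree hfree ?_
  have hmin : (j + 1) * q - M ≤ R.minDegree := by
    refine le_minDegree_of_forall_le_degree _ _ fun x ↦ ?_
    have hx := hdeg x
    rw [degree_compl, hV] at hx
    have : (j + 2) * q = (j + 1) * q + q := by ring
    omega
  refine lt_of_lt_of_le ?_ hmin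
  rw [hV, show 3 * (j + 2) - 4 = 3 * j + 2 by omega, show 3 * (j + 2) - 1 = 3 * j + 5 by omega]
  have hM : M ≤ (j + 1) * q := by nlinarith
  refine Nat.div_lt_of_lt_mul ?_
  have hkey : (3 * j + 5) * ((j + 1) * q) = (3 * j + 2) * ((j + 2) * q) + q := by ring
  zify [hM] at hkey ⊢
  nlinarith

theorem card_filter_not_adj_le_of_degree_compl_lt [DecidableEq V] [DecidableEq ι]
    (C : R.Coloring ι) {x : V} {i : ι} (hi : C x ≠ i)
    (hx : #{y | C y = C x} = q) (hdeg : Rᶜ.degree x < q + M) :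
    #{y | C y = i ∧ ¬ R.Adj x y} ≤ M := by
  let own := Finset.erase {y | C y = C x} x
  let other : Finset V := {y | C y = i ∧ ¬ R.Adj x y}
  have hdisj : Disjoint own other := by
    rw [Finset.disjoint_left]
    grind
  have hsub : own ∪ other ⊆ Rᶜ.neighborFinset x := by
    intro y hy
    rw [mem_neighborFinset, compl_adj]
    have := C.valid (v := x) (w := y)
    grind
  have hle := Finset.card_le_card hsub
  rw [Finset.card_union_of_disjoint hdisj, Finset.card_erase_of_mem (by simp), hx,
    card_neighborFinset_eq_degree] at hle
  have : 0 < q := hx ▸ Finset.card_pos.2 ⟨x, by simp⟩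
  change #other ≤ M
  omega

theorem exists_coloring_of_cliqueFree_of_not_containsCopy_genFan_compl (hk : 0 < k) (ht : 0 < t)
    (hV : Fintype.card V = k * (t * n)) (hfree : R.CliqueFree (k + 1))
    (hfan : ¬ containsCopy Rᶜ (genFan n t)) (hn : 3 * k * (k + t - 1).choose k < t * n) :
    ∃ C : R.Coloring (Fin k), (∀ i, #{x | C x = i} = t * n) ∧
      ∀ x i, C x ≠ i →
        #{y | C y = i ∧ ¬ R.Adj x y} ≤ (k + t - 1).choose k := by
  classical
  have hM (S : Finset V) (hS : (k + t - 1).choose k ≤ #S) : ∃ T ⊆ S, Rᶜ.IsNClique t T := by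
    rw [Nat.add_sub_assoc ht] at hS
    have h := exists_isNClique_or_isNClique_compl R k (t - 1) S hS
    rw [Nat.sub_add_cancel ht] at h
    exact h.resolve_left fun ⟨T, _, hT⟩ ↦ hfree T hT
  have hdeg (x : V) : Rᶜ.degree x < t * n + (k + t - 1).choose k := by
    have := degree_add_lt_of_not_containsCopy_genFan (x := x) hM hfan
    omega
  obtain ⟨C⟩ := colorable_of_forall_degree_compl_lt hk hV hfree hdeg hn
  have hfib (i : Fin k) : #{x | C x = i} = t * n := by
    refine card_fiber_eq_of_forall_le (by simpa using hV) (fun i ↦ ?_) i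
    by_contra! h
    exact hfan (containsCopy_genFan_of_isClique (isClique_compl_filter_coloring C i) h)
  exact ⟨C, hfib, fun x i hi ↦
    card_filter_not_adj_le_of_degree_compl_lt C hi (hfib (C x)) (hdeg x)⟩

end Coloring

variable {k t n m ℓ : ℕ} {R : SimpleGraph (Option (Fin m))} [DecidableRel R.Adj]

theorem card_filter_not_adj_none_lt [DecidableEq ι] (ht : 0 < t) (hn : 0 < n)
    (hfan : ¬ containsCopy (KstarK m ℓ \ R) (genFan n t))
    (C : (R.comap Function.Embedding.some).Coloring ι) {i : ι}
    (hi : #{x | C x = i} = t * n) :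
    #{y ∈ {y : Fin m | (y : ℕ) < ℓ ∧ ¬ R.Adj none (some y)} | C y = i} < t := by
  classical
  by_contra! h
  let Q : Finset (Option (Fin m)) := Finset.map .some {y | C y = i}
  have hQ : (KstarK m ℓ \ R).IsClique Q := by
    have hclique := isClique_compl_filter_coloring C i
    rw [← comap_some_KstarK_sdiff (ℓ := ℓ)] at hclique
    rw [Finset.coe_map]
    exact hclique.map.mono (map_comap_le _ _)
  refine hfan (containsCopy_genFan_of_le_card_filter_adj ht hn hQ (by simpa [Q] using hi)
    (v := none) (by simp [Q]) (h.trans ?_))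
  rw [← Finset.card_map Function.Embedding.some]
  refine Finset.card_le_card fun x hx ↦ ?_
  obtain ⟨y, hy, rfl⟩ := Finset.mem_map.1 hx
  simp only [Finset.mem_filter, Finset.mem_univ, true_and] at hy
  simp [Q, hy]

theorem starArrows_completeGraph_genFan (hk : 0 < k) (ht : 0 < t)
    (hn : 3 * k * (k + t - 1).choose k < n) :
    starArrows (k * (t * n)) ((k - 1) * (t * n) + t) (completeGraph (Fin (k + 1)))
      (genFan n t) := by
  classical
  intro R _
  by_contra! h
  obtain ⟨hred, hfan⟩ := h
  have hfree := not_not.1 (mt containsCopy_completeGraph_fin.2 hred)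
  have hfan' : ¬ containsCopy (R.comap Function.Embedding.some)ᶜ (genFan n t) := fun h ↦ by
    rw [← comap_some_KstarK_sdiff (ℓ := (k - 1) * (t * n) + t)] at h
    exact hfan (h.trans (comap_isContained _ _))
  have hq : n ≤ t * n := Nat.le_mul_of_pos_left n ht
  obtain ⟨C, hfib, hnon⟩ := exists_coloring_of_cliqueFree_of_not_containsCopy_genFan_compl hk ht
    (Fintype.card_fin _) (hfree.comap (comap_isContained _ R)) hfan'
    (hn.trans_le hq)
  let E : Finset (Fin (k * (t * n))) := {y | (y : ℕ) < (k - 1) * (t * n) + t}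
  have hE : Fintype.card (Fin k) * (t * n) + t ≤ #E + t * n := by
    have hkq : (k - 1) * (t * n) + t * n = k * (t * n) := by
      rw [← Nat.succ_mul, Nat.succ_eq_add_one, Nat.sub_add_cancel hk]
    have htn : t ≤ t * n := Nat.le_mul_of_pos_right t (by omega)
    rw [Fintype.card_fin, Fin.card_filter_val_lt]
    omega
  have hM : 2 * (Fintype.card (Fin k) * (k + t - 1).choose k) + t ≤ t * n + 1 := by
    rw [Fintype.card_fin]
    have : 1 ≤ n := by omega
    nlinarith
  have : NeZero k := ⟨hk.ne'⟩
  obtain ⟨T, hTE, hT⟩ := exists_isNClique_sdiff_of_card_fiber_le (fun i ↦ (hfib i).le) hnon hM hE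
    fun i ↦ card_filter_not_adj_none_lt ht (by omega) hfan C (hfib i)
  rw [Fintype.card_fin] at hT
  have hclique := (hT.map (f := Function.Embedding.some)).mono (map_comap_le _ R)
  refine hfree _ (hclique.insert (a := none) fun x hx ↦ ?_)
  obtain ⟨y, hy, rfl⟩ := Finset.mem_map.1 hx
  obtain ⟨hyE, hyD⟩ := Finset.mem_sdiff.1 (hTE hy)
  by_contra hadj
  exact hyD (Finset.mem_filter.2 ⟨Finset.mem_univ y, (Finset.mem_filter.1 hyE).2, hadj⟩)

end UpperBound

theorem statement_16_general {k t n : ℕ} (hk : 0 < k) (ht : 0 < t)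
    (hn : 3 * k * (k + t - 1).choose k < n) :
    starRamsey (completeGraph (Fin (k + 1))) (genFan n t) = (k - 1) * t * n + t := by
  have hlower (ℓ : ℕ) (hℓ : ℓ < (k - 1) * (t * n) + t) :
      ¬ starArrows (k * (t * n)) ℓ (completeGraph (Fin (k + 1))) (genFan n t) := by
    obtain ⟨j, rfl⟩ := Nat.exists_eq_add_one_of_ne_zero hk.ne'
    exact not_starArrows_completeGraph_genFan ht (by omega) hℓ
  rw [mul_assoc]
  exact starRamsey_eq_of_starArrows (by omega) (starArrows_completeGraph_genFan hk ht hn) hlower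

theorem statement_16 (k t : ℕ) (hk : 2 ≤ k) (ht : 2 ≤ t) :
    ∃ n₀ : ℕ, ∀ n : ℕ, n₀ ≤ n →
      starRamsey (completeGraph (Fin (k + 1))) (genFan n t) = (k - 1) * t * n + t :=
  ⟨3 * k * (k + t - 1).choose k + 1, fun _ hn ↦
    statement_16_general (by omega) (by omega) hn⟩
end
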